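/- arXiv:alg-geom/9601020 — 2 statements merged into one kernel-verified Lean document; each statement's English description precedes it below -/
import Mathlib

section
/- Fix an integer m ≥ 1 and consider, for a 9-tuple (p_1,…,p_9) of points of ℙ²(K), the condition (*): there exists a nonzero homogeneous polynomial F ∈ K[X,Y,Z] of degree 3m with mult_{p_1}(F) ≥ m+1, mult_{p_i}(F) ≥ m for i = 2,…,8, and mult_{p_9}(F) ≥ m−1. Then: (a) for generic (p_1,…,p_9) ∈ (ℙ²(K))⁹ the condition (*) fails; and (b) there exists a 9-tuple of pairwise distinct points (p_1,…,p_9) satisfying (*), for which moreover the polynomial F can be chosen irreducible and is unique up to a scalar factor. -/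
/-!
On the plane blown up at the nine points, the system is the complete linear system of
`m (3L - E_1 - … - E_9) - E_1 + E_9`, a class of self-intersection `-2` which is orthogonal to
the anticanonical class. Such a system is empty in general, but it contains an irreducible
curve when the nine points lie on a cubic and satisfy one relation in its group law. The cubic
used here is the nodal one, `X³ - Y³ = XYZ`, parametrized by `phi t = (t, t², 1 - t³)`; its
smooth points form the group `Kˣ`, and the `3d` parameters of its intersection with a form of
degree `d` have product `1` (`roots_prod`). Take the nine points `phi (t i)`, and let
`e_m = mlt m = (m + 1, m, …, m, m - 1)`, whose entries sum to `9m`, the intersection number of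
the cubic with a form of degree `3m`.

*Emptiness.* If a member of the system does not contain the cubic, then it meets it exactly in
the parameters `t i` with multiplicities `e_m i`, hence `∏ (t i) ^ (e_m i) = 1`. If it contains
the cubic, then removing the cubic gives a member of the system for `m - 1`, since the cubic is
smooth at the nine points. So the system is zero as soon as `∏ (t i) ^ (e_k i) ≠ 1` for
`1 ≤ k ≤ m` (`sys_eq_zero`), for instance for the parameters `2, 4, 8, …`. That the conditions
have only the trivial solution at one tuple means that some maximal minor of the matrix of
conditions is nonzero there; this minor, as a polynomial in the coordinates of the points, is
the multihomogeneous `G` witnessing genericity (`generic_of_point`), which proves (a).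

*Existence.* The number of conditions equals the number of coefficients, so leaving out the
condition `∂_Y^m F = 0` at the first point there is a nonzero solution `F`. When
`∏ (t i) ^ (e_m i) = 1`, the group law forces `t 0` to be a root of multiplicity `m + 1` of the
restriction of `F` to the cubic. The derivatives of order `m` along the cubic therefore vanish
at the first point, and since in the chart `X = 1` the tangent direction is not the direction
`Z`, the omitted condition follows from the others (`exists_sys`).

*Uniqueness and irreducibility.* There are parameters, monomials in eight primes, for which the
relations `∏ (t i) ^ (a i) = 1` with `a i ≥ 0` are exactly the multiples of `e_m`
(`exists_params`). Then the systems for `1 ≤ k < m` are zero, so no nonzero member contains the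
cubic; two members have restrictions with the same roots, hence proportional ones, and are
themselves proportional. If `F = A * B`, then the intersection of `A` with the cubic gives a
relation between the `t i` with exponents at most `e_m i`, so these exponents are `0` or `e_m`,
and `A` or `B` is constant (`exists_irreducible`).
-/

/-! Basic notions for plane curves over an algebraically closed field `K` of
characteristic zero: the projective plane, multiplicity of a homogeneous
polynomial at a point, ordinary points and nodes, generic tuples of points. -/

noncomputable section

open scoped BigOperators

/-- The projective plane over `K`. -/
abbrev P2 (K : Type) [Field K] : Type := Projectivization K (Fin 3 → K)

/-- The restriction of `F` to the parametrized line `t ↦ v + t • w`,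
as a polynomial in `t`. -/
def linePoly {K : Type} [Field K] (F : MvPolynomial (Fin 3) K) (v w : Fin 3 → K) :
    Polynomial K :=
  MvPolynomial.eval₂ Polynomial.C
    (fun i => Polynomial.C (v i) + Polynomial.C (w i) * Polynomial.X) F

/-- Iterated partial derivative of `F` along a list of coordinate directions. -/
def pderivs {K : Type} [Field K] (l : List (Fin 3)) (F : MvPolynomial (Fin 3) K) :
    MvPolynomial (Fin 3) K :=
  l.foldr (fun i G => MvPolynomial.pderiv i G) F

/-- `F` vanishes to order at least `m` at the vector `v`:
all partial derivatives of order `< m` vanish at `v`.  (In characteristic zero this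
is the statement that all Taylor monomials of total degree `< m` vanish.) -/
def MultAtLeastVec {K : Type} [Field K] (F : MvPolynomial (Fin 3) K) (v : Fin 3 → K)
    (m : ℕ) : Prop :=
  ∀ l : List (Fin 3), l.length < m → MvPolynomial.eval v (pderivs l F) = 0

/-- `F` vanishes to order exactly `m` at the vector `v` (the multiplicity of the
point `[v]` on the curve `{F = 0}` equals `m`). -/
def IsMultVec {K : Type} [Field K] (F : MvPolynomial (Fin 3) K) (v : Fin 3 → K)
    (m : ℕ) : Prop :=
  MultAtLeastVec F v m ∧
    ∃ l : List (Fin 3), l.length = m ∧ MvPolynomial.eval v (pderivs l F) ≠ 0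

/-- `mult_p F ≥ m` for a projective point `p`. -/
def MultAtLeast {K : Type} [Field K] (F : MvPolynomial (Fin 3) K) (p : P2 K) (m : ℕ) :
    Prop :=
  MultAtLeastVec F p.rep m

/-- `mult_p F = m` for a projective point `p`. -/
def IsMultAt {K : Type} [Field K] (F : MvPolynomial (Fin 3) K) (p : P2 K) (m : ℕ) :
    Prop :=
  IsMultVec F p.rep m

/-- `v` is an ordinary point of multiplicity `m` of `F`: the multiplicity is exactly
`m` and the degree-`m` initial form of `F` at `v` (i.e. `w ↦` the coefficient of
`t^m` in `F(v + t w)`, a homogeneous degree `m` polynomial function of `w`,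
well defined modulo the direction `v`) factors into `m` pairwise non-proportional
linear forms (each vanishing on `v`, i.e. linear forms on the tangent plane). -/
def OrdinaryAtVec {K : Type} [Field K] (F : MvPolynomial (Fin 3) K) (v : Fin 3 → K)
    (m : ℕ) : Prop :=
  IsMultVec F v m ∧
  ∃ (c : K) (L : Fin m → Fin 3 → K),
    (∀ i, ∑ j, L i j * v j = 0) ∧
    (∀ i j, i ≠ j → ∀ a : K, L i ≠ a • L j) ∧
    ∀ w : Fin 3 → K, (linePoly F v w).coeff m = c * ∏ i, ∑ j, L i j * w j

/-- `p` is an ordinary point of multiplicity `m` of `F`; an ordinary point of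
multiplicity `2` is a node. -/
def OrdinaryAt {K : Type} [Field K] (F : MvPolynomial (Fin 3) K) (p : P2 K) (m : ℕ) :
    Prop :=
  OrdinaryAtVec F p.rep m

/-- `F` has ordinary points of multiplicity `d i` at the points `p i` and exactly
`k` nodes as its only further singularities: each `p i` is an ordinary point of
multiplicity `d i`, and outside of the points `p i` the polynomial `F` has exactly
`k` singular points, each of which is a node. -/
def HasOrdinaryAndNodes {K : Type} [Field K] {r : ℕ} (F : MvPolynomial (Fin 3) K)
    (p : Fin r → P2 K) (d : Fin r → ℕ) (k : ℕ) : Prop :=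
  (∀ i, OrdinaryAt F (p i) (d i)) ∧
  {q : P2 K | q ∉ Set.range p ∧ MultAtLeast F q 2}.Finite ∧
  {q : P2 K | q ∉ Set.range p ∧ MultAtLeast F q 2}.ncard = k ∧
  ∀ q : P2 K, q ∉ Set.range p → MultAtLeast F q 2 → OrdinaryAt F q 2

/-- A property `P` of `r`-tuples of points of the projective plane holds
generically: there is a nonzero multihomogeneous polynomial `G` in `r` groups of
`3` variables (so that its non-vanishing locus is a dense Zariski-open subset of
`(ℙ²)^r`) such that `P` holds for every tuple of pairwise distinct points at whose
representatives `G` does not vanish. -/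
def GenericTuple (K : Type) [Field K] (r : ℕ) (P : (Fin r → P2 K) → Prop) : Prop :=
  ∃ (G : MvPolynomial (Fin r × Fin 3) K) (n : Fin r → ℕ),
    G ≠ 0 ∧
    (∀ m ∈ G.support, ∀ i : Fin r, ∑ j : Fin 3, m (i, j) = n i) ∧
    ∀ p : Fin r → P2 K, Function.Injective p →
      MvPolynomial.eval (fun q : Fin r × Fin 3 => (p q.1).rep q.2) G ≠ 0 → P p

end
noncomputable section

/-- The projective point `p` lies on the line with coefficient vector `g`. -/
def OnLine {K : Type} [Field K] (g : Fin 3 → K) (p : P2 K) : Prop :=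
  ∑ j, g j * p.rep j = 0

/-- The linear form with coefficient vector `g`, as a homogeneous polynomial. -/
def linearForm {K : Type} [Field K] (g : Fin 3 → K) : MvPolynomial (Fin 3) K :=
  ∑ j, MvPolynomial.C (g j) * MvPolynomial.X j

/-- The curve `{F = 0}` meets the line with coefficient vector `g` transversally:
the line is not a component of the curve, and at every point `q` of the
intersection the intersection multiplicity of the curve and the line (computed as
the order of vanishing at `t = 0` of `F` restricted to a parametrization
`t ↦ rep q + t • rep b` of the line, `b` any other point of the line) equals the
multiplicity of the curve at `q`. -/
def MeetsTransversally {K : Type} [Field K] (F : MvPolynomial (Fin 3) K)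
    (g : Fin 3 → K) : Prop :=
  ¬ (linearForm g ∣ F) ∧
  ∀ q : P2 K, OnLine g q → MvPolynomial.eval q.rep F = 0 →
    ∀ b : P2 K, OnLine g b → b ≠ q →
      ∀ m : ℕ, IsMultAt F q m →
        Polynomial.rootMultiplicity 0 (linePoly F q.rep b.rep) = m

/-- A property `P` of `r`-tuples of points of the projective plane holds
generically among the tuples satisfying a (Zariski locally closed) incidence
condition `C`: there is a multihomogeneous polynomial `G` in `r` groups of `3`
variables that does not vanish identically on the locus `C` (so that its
non-vanishing locus is a dense open subset of the irreducible locus `C`) such that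
`P` holds for every tuple of pairwise distinct points satisfying `C` at whose
representatives `G` does not vanish. -/
def GenericTupleOn (K : Type) [Field K] (r : ℕ) (C : (Fin r → P2 K) → Prop)
    (P : (Fin r → P2 K) → Prop) : Prop :=
  ∃ (G : MvPolynomial (Fin r × Fin 3) K) (n : Fin r → ℕ),
    (∀ m ∈ G.support, ∀ i : Fin r, ∑ j : Fin 3, m (i, j) = n i) ∧
    (∃ p₀ : Fin r → P2 K, C p₀ ∧
      MvPolynomial.eval (fun q : Fin r × Fin 3 => (p₀ q.1).rep q.2) G ≠ 0) ∧
    ∀ p : Fin r → P2 K, Function.Injective p → C p →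
      MvPolynomial.eval (fun q : Fin r × Fin 3 => (p q.1).rep q.2) G ≠ 0 → P p

/-- A property `P` of `s`-tuples of lines (given by nonzero coefficient vectors,
i.e. points of the dual projective plane) holds generically: there is a nonzero
multihomogeneous polynomial `G` in `s` groups of `3` dual variables such that `P`
holds for every tuple of lines at whose coefficient vectors `G` does not vanish. -/
def GenericLines (K : Type) [Field K] (s : ℕ)
    (P : (Fin s → (Fin 3 → K)) → Prop) : Prop :=
  ∃ (G : MvPolynomial (Fin s × Fin 3) K) (n : Fin s → ℕ),
    G ≠ 0 ∧
    (∀ m ∈ G.support, ∀ i : Fin s, ∑ j : Fin 3, m (i, j) = n i) ∧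
    ∀ l : Fin s → Fin 3 → K, (∀ i, l i ≠ 0) →
      MvPolynomial.eval (fun q : Fin s × Fin 3 => l q.1 q.2) G ≠ 0 → P l

end


namespace SpecialSystem

open MvPolynomial

variable {K : Type} [Field K]

set_option linter.unusedSectionVars false

/-! ### Derivatives and multiplicity -/

lemma pderivs_append (l l' : List (Fin 3)) (F : MvPolynomial (Fin 3) K) :
    pderivs (l ++ l') F = pderivs l (pderivs l' F) := by
  simp [pderivs, List.foldr_append]

lemma mult_zero (F : MvPolynomial (Fin 3) K) (v : Fin 3 → K) : MultAtLeastVec F v 0 :=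
  fun _ h => absurd h (Nat.not_lt_zero _)

lemma mult_mono {F : MvPolynomial (Fin 3) K} {v : Fin 3 → K} {n k : ℕ} (hk : k ≤ n)
    (h : MultAtLeastVec F v n) : MultAtLeastVec F v k :=
  fun l hl => h l (hl.trans_le hk)

/-- The recursive description of multiplicity, on which all inductions rest. -/
lemma mult_succ {F : MvPolynomial (Fin 3) K} {v : Fin 3 → K} {n : ℕ} :
    MultAtLeastVec F v (n + 1) ↔
      eval v F = 0 ∧ ∀ i, MultAtLeastVec (pderiv i F) v n := by
  constructor
  · intro h
    refine ⟨h [] (by simp), fun i l hl => ?_⟩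
    have := h (l ++ [i]) (by simpa using hl)
    rwa [pderivs_append] at this
  · rintro ⟨h0, h⟩ l hl
    rcases List.eq_nil_or_concat l with rfl | ⟨l', i, rfl⟩
    · exact h0
    · rw [List.concat_eq_append, pderivs_append]
      exact h i l' (by simpa using hl)

lemma pderivs_homog {F : MvPolynomial (Fin 3) K} {d : ℕ} (hF : F.IsHomogeneous d)
    (l : List (Fin 3)) : (pderivs l F).IsHomogeneous (d - l.length) := by
  induction l with
  | nil => simpa [pderivs] using hF
  | cons i l ih =>
    have := ih.pderiv (i := i)
    rwa [Nat.sub_sub] at this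

lemma eval_smul_homog {F : MvPolynomial (Fin 3) K} {d : ℕ} (hF : F.IsHomogeneous d)
    (c : K) (v : Fin 3 → K) : eval (c • v) F = c ^ d * eval v F := by
  rw [eval_eq, eval_eq, Finset.mul_sum]
  refine Finset.sum_congr rfl fun s hs => ?_
  have hd : ∑ i ∈ s.support, s i = d := by
    have := hF (mem_support_iff.mp hs)
    simpa [Finsupp.weight_apply, Finsupp.sum] using this
  have : ∏ i ∈ s.support, (c • v) i ^ s i = c ^ d * ∏ i ∈ s.support, v i ^ s i := by
    simp only [Pi.smul_apply, smul_eq_mul, mul_pow]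
    rw [Finset.prod_mul_distrib, Finset.prod_pow_eq_pow_sum, hd]
  rw [this]; ring

lemma mult_smul {F : MvPolynomial (Fin 3) K} {d : ℕ} (hF : F.IsHomogeneous d)
    {c : K} (hc : c ≠ 0) (v : Fin 3 → K) (n : ℕ) :
    MultAtLeastVec F (c • v) n ↔ MultAtLeastVec F v n := by
  refine forall₂_congr fun l _ => ?_
  rw [eval_smul_homog (pderivs_homog hF l)]
  simp [hc]

/-! ### Multiplicity and orders of power series -/

/-- The translate `F(X + v)`; its Taylor expansion at `0` is that of `F` at `v`. -/
noncomputable def shift (v : Fin 3 → K) :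
    MvPolynomial (Fin 3) K →ₐ[K] MvPolynomial (Fin 3) K :=
  aeval fun i => X i + C (v i)

lemma pderiv_shift (v : Fin 3 → K) (i : Fin 3) (F : MvPolynomial (Fin 3) K) :
    pderiv i (shift v F) = shift v (pderiv i F) := by
  induction F using MvPolynomial.induction_on with
  | C a => simp [shift]
  | add p q hp hq => simp [hp, hq]
  | mul_X p j hp =>
    rw [map_mul, pderiv_mul, pderiv_mul, hp]
    have : pderiv i (shift v (X j)) = shift v (pderiv i (X j)) := by
      simp [shift, pderiv_X, Pi.single_apply]
    rw [map_add, map_mul, map_mul, this]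

lemma coeff_zero_shift (v : Fin 3 → K) (F : MvPolynomial (Fin 3) K) :
    coeff 0 (shift v F) = eval v F := by
  rw [← constantCoeff_eq]
  have : (constantCoeff.comp (shift v).toRingHom : MvPolynomial (Fin 3) K →+* K) = eval v := by
    apply MvPolynomial.ringHom_ext <;> intro <;> simp [shift]
  exact congrArg (fun f => f F) this

lemma natCast_le_order_iff (G : MvPolynomial (Fin 3) K) (n : ℕ) :
    (n : ℕ∞) ≤ (G : MvPowerSeries (Fin 3) K).order ↔
      ∀ s : Fin 3 →₀ ℕ, s.degree < n → coeff s G = 0 := by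
  constructor
  · intro h s hs
    have := MvPowerSeries.coeff_of_lt_order (f := (G : MvPowerSeries (Fin 3) K)) (d := s)
      (lt_of_lt_of_le (by exact_mod_cast hs) h)
    simpa using this
  · intro h
    exact MvPowerSeries.nat_le_order fun s hs => by simpa using h s hs

/-- In characteristic zero, multiplicity at `v` is the order of the Taylor expansion
at `v`. -/
lemma mult_iff_order [CharZero K] (F : MvPolynomial (Fin 3) K) (v : Fin 3 → K) (n : ℕ) :
    MultAtLeastVec F v n ↔ (n : ℕ∞) ≤ (shift v F : MvPowerSeries (Fin 3) K).order := by
  rw [natCast_le_order_iff]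
  induction n generalizing F with
  | zero => simp [mult_zero]
  | succ n ih =>
    rw [mult_succ]
    simp_rw [ih, ← pderiv_shift, coeff_pderiv, ← coeff_zero_shift]
    constructor
    · rintro ⟨h0, h⟩ s hs
      by_cases hs0 : s = 0
      · rw [hs0]; exact h0
      · obtain ⟨i, hi⟩ := Finsupp.ne_iff.mp hs0
        have hle : Finsupp.single i 1 ≤ s := by
          simpa [Finsupp.single_le_iff] using Nat.one_le_iff_ne_zero.mpr hi
        obtain ⟨u, rfl⟩ := exists_add_of_le hle
        rw [map_add, Finsupp.degree_single] at hs
        have := h i u (by omega)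
        rw [add_comm]
        exact (mul_eq_zero.mp this).resolve_right (Nat.cast_add_one_ne_zero _)
    · intro h
      refine ⟨h 0 (by simp), fun i s hs => ?_⟩
      rw [h _ (by rw [map_add, Finsupp.degree_single]; omega), zero_mul]

/-- Dividing by a curve that is smooth at `v` lowers the multiplicity at `v` by at most
one. -/
lemma mult_of_mul [CharZero K] {A H : MvPolynomial (Fin 3) K} {v : Fin 3 → K} {n : ℕ}
    (i : Fin 3) (hA : eval v (pderiv i A) ≠ 0) (h : MultAtLeastVec (A * H) v n) :
    MultAtLeastVec H v (n - 1) := by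
  rw [mult_iff_order] at h ⊢
  have hA2 : ¬ MultAtLeastVec A v 2 := fun h2 => hA (h2 [i] (by simp))
  rw [mult_iff_order, not_le] at hA2
  rw [map_mul, coe_mul, MvPowerSeries.order_mul] at h
  generalize (shift v A : MvPowerSeries (Fin 3) K).order = a at *
  generalize (shift v H : MvPowerSeries (Fin 3) K).order = b at *
  induction b using ENat.recTopCoe with
  | top => simp
  | coe b =>
    induction a using ENat.recTopCoe with
    | top => simp at hA2
    | coe a =>
      norm_cast at *
      omega

lemma isHomogeneous_iff {A : MvPolynomial (Fin 3) K} {a : ℕ} :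
    A.IsHomogeneous a ↔ A.totalDegree ≤ a ∧ (a : ℕ∞) ≤ (A : MvPowerSeries (Fin 3) K).order := by
  rw [natCast_le_order_iff]
  constructor
  · intro h
    exact ⟨h.totalDegree_le, fun s hs => h.coeff_eq_zero hs.ne⟩
  · rintro ⟨h1, h2⟩ s hs
    have h3 : a ≤ s.degree := not_lt.mp fun h => hs (h2 s h)
    have h4 := le_totalDegree (mem_support_iff.mpr hs)
    have h5 : s.degree = s.sum fun _ e => e := by simp [Finsupp.degree_apply, Finsupp.sum]
    have : s.degree = a := by omega
    rw [← this, Finsupp.degree_eq_weight_one]; rfl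

/-- Factors of a nonzero homogeneous polynomial are homogeneous: both the total degree and
the order at the origin are additive. -/
lemma homog_of_mul {A B : MvPolynomial (Fin 3) K} {d : ℕ} (hA : A ≠ 0) (hB : B ≠ 0)
    (h : (A * B).IsHomogeneous d) :
    ∃ a b, a + b = d ∧ A.IsHomogeneous a ∧ B.IsHomogeneous b := by
  have hd := h.totalDegree (mul_ne_zero hA hB)
  rw [totalDegree_mul_of_isDomain hA hB] at hd
  refine ⟨_, _, hd, isHomogeneous_iff.mpr ⟨le_rfl, ?_⟩, isHomogeneous_iff.mpr ⟨le_rfl, ?_⟩⟩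
  all_goals
    have ho := (isHomogeneous_iff.mp h).2
    rw [coe_mul, MvPowerSeries.order_mul] at ho
    have key : ∀ P : MvPolynomial (Fin 3) K, P ≠ 0 →
        (P : MvPowerSeries (Fin 3) K).order ≤ (P.totalDegree : ℕ∞) := by
      intro P hP
      by_contra hlt
      rw [not_le] at hlt
      have h1 := (natCast_le_order_iff P (P.totalDegree + 1)).mp (by
        push_cast; exact Order.add_one_le_of_lt hlt)
      apply hP
      ext s
      by_contra hs
      rw [coeff_zero] at hs
      have h4 := le_totalDegree (mem_support_iff.mpr hs)
      have h5 : s.degree = s.sum fun _ e => e := by simp [Finsupp.degree_apply, Finsupp.sum]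
      exact hs (h1 s (by omega))
    have kA := key A hA
    have kB := key B hB
    rw [← hd] at ho
    generalize (A : MvPowerSeries (Fin 3) K).order = a at *
    generalize (B : MvPowerSeries (Fin 3) K).order = b at *
    lift a to ℕ using ne_top_of_le_ne_top (ENat.natCast_ne_top _) kA
    lift b to ℕ using ne_top_of_le_ne_top (ENat.natCast_ne_top _) kB
    norm_cast at *
    omega

/-! ### Restriction to the nodal cubic -/

/-- The parametrization of the nodal cubic `X³ - Y³ = XYZ`; the node is the common image
of `0` and `∞`, and the smooth points form the group `Kˣ`. -/
def phi (t : K) : Fin 3 → K := ![t, t ^ 2, 1 - t ^ 3]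

/-- Restriction of a form to the nodal cubic, via the parametrization `phi`. -/
noncomputable def pull : MvPolynomial (Fin 3) K →ₐ[K] Polynomial K :=
  aeval ![Polynomial.X, Polynomial.X ^ 2, 1 - Polynomial.X ^ 3]

/-- The equation `X³ - Y³ - XYZ` of the nodal cubic. -/
noncomputable def cubic (K : Type) [Field K] : MvPolynomial (Fin 3) K :=
  X 0 ^ 3 - X 1 ^ 3 - X 0 * X 1 * X 2

lemma eval_pull (F : MvPolynomial (Fin 3) K) (t : K) :
    (pull F).eval t = eval (phi t) F := by
  have : ((Polynomial.evalRingHom t).comp pull.toRingHom : MvPolynomial (Fin 3) K →+* K)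
      = eval (phi t) := by
    apply MvPolynomial.ringHom_ext
    · intro; simp [pull]
    · intro i; fin_cases i <;> simp [pull, phi]
  exact congrArg (fun f => f F) this

lemma derivative_pull (F : MvPolynomial (Fin 3) K) :
    Polynomial.derivative (pull F) = pull (pderiv 0 F)
      + 2 * Polynomial.X * pull (pderiv 1 F) - 3 * Polynomial.X ^ 2 * pull (pderiv 2 F) := by
  induction F using MvPolynomial.induction_on with
  | C a => simp [pull]
  | add p q hp hq => simp only [map_add, hp, hq]; ring
  | mul_X p j hp =>
    simp only [map_mul, Polynomial.derivative_mul, pderiv_mul, hp, map_add]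
    have h2 : (Polynomial.C 2 : Polynomial K) = 2 := rfl
    fin_cases j <;> simp [pull, pderiv_X, h2] <;> ring

lemma pow_dvd_of_derivative [CharZero K] {f : Polynomial K} {a : K} {n : ℕ}
    (h0 : f.eval a = 0) (h : (Polynomial.X - Polynomial.C a) ^ n ∣ Polynomial.derivative f) :
    (Polynomial.X - Polynomial.C a) ^ (n + 1) ∣ f := by
  by_cases hf : f = 0
  · simp [hf]
  have hr := Polynomial.derivative_rootMultiplicity_of_root (p := f) (t := a) h0
  have hpos : 0 < f.rootMultiplicity a := (Polynomial.rootMultiplicity_pos hf).mpr h0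
  have hd : Polynomial.derivative f ≠ 0 := by
    intro hd
    have := Polynomial.eq_C_of_derivative_eq_zero hd
    rw [this] at h0 hf
    simp at h0
    simp [h0] at hf
  rw [← Polynomial.le_rootMultiplicity_iff hd] at h
  rw [← Polynomial.le_rootMultiplicity_iff hf]
  omega

/-- Intersection multiplicity with the cubic is at least the multiplicity of the curve. -/
lemma pow_dvd_pull [CharZero K] {F : MvPolynomial (Fin 3) K} {t : K} {n : ℕ}
    (h : MultAtLeastVec F (phi t) n) :
    (Polynomial.X - Polynomial.C t) ^ n ∣ pull F := by
  induction n generalizing F with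
  | zero => simp
  | succ n ih =>
    obtain ⟨h0, h⟩ := mult_succ.mp h
    refine pow_dvd_of_derivative (by rw [eval_pull, h0]) ?_
    rw [derivative_pull]
    exact dvd_sub (dvd_add (ih (h 0)) ((ih (h 1)).mul_left _)) ((ih (h 2)).mul_left _)

/-- The two branches at the node give the two extreme coefficients, which therefore agree
up to sign. -/
lemma pull_homog {F : MvPolynomial (Fin 3) K} {d : ℕ} (hF : F.IsHomogeneous d) :
    (pull F).natDegree ≤ 3 * d ∧
      (pull F).coeff (3 * d) = (-1) ^ d * (pull F).coeff 0 := by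
  have key : ∀ s : Fin 3 →₀ ℕ, s.degree = d →
      (pull (monomial s (1 : K))).natDegree ≤ 3 * d ∧
      (pull (monomial s (1 : K))).coeff (3 * d)
        = (-1) ^ d * (pull (monomial s (1 : K))).coeff 0 := by
    intro s hs
    have hs' : s 0 + s 1 + s 2 = d := by
      rw [← hs, Finsupp.degree_eq_sum, Fin.sum_univ_three]
    have hm : pull (monomial s (1 : K)) =
        Polynomial.X ^ (s 0 + 2 * s 1) * (1 - Polynomial.X ^ 3) ^ s 2 := by
      rw [pull, aeval_monomial, Finsupp.prod_fintype _ _ (by simp), Fin.prod_univ_three]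
      simp only [map_one, one_mul, Matrix.cons_val_zero, Matrix.cons_val_one, Matrix.cons_val]
      ring
    have h3 : (1 - Polynomial.X ^ 3 : Polynomial K).natDegree ≤ 3 := by compute_degree
    have h3' : ((1 - Polynomial.X ^ 3 : Polynomial K) ^ s 2).natDegree ≤ s 2 * 3 :=
      Polynomial.natDegree_pow_le_of_le _ h3
    have hle : (pull (monomial s (1 : K))).natDegree ≤ (s 0 + 2 * s 1) + s 2 * 3 := by
      rw [hm]
      exact Polynomial.natDegree_mul_le_of_le (Polynomial.natDegree_X_pow_le _) h3'
    refine ⟨by omega, ?_⟩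
    by_cases hz : s 0 = 0 ∧ s 1 = 0
    · have hd : s 2 = d := by omega
      rw [hm, hz.1, hz.2, hd]
      simp only [mul_zero, add_zero, pow_zero, one_mul]
      rw [mul_comm 3 d, Polynomial.coeff_pow_of_natDegree_le h3,
        Polynomial.coeff_zero_eq_eval_zero]
      simp [Polynomial.coeff_one]
    · rw [Polynomial.coeff_eq_zero_of_natDegree_lt (by omega), hm,
        Polynomial.coeff_zero_eq_eval_zero]
      have : s 0 + 2 * s 1 ≠ 0 := by omega
      rw [Polynomial.eval_mul, Polynomial.eval_pow, Polynomial.eval_X, zero_pow this]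
      simp
  have hsum : pull F = ∑ s ∈ F.support, Polynomial.C (coeff s F) * pull (monomial s (1 : K)) := by
    conv_lhs => rw [F.as_sum]
    rw [map_sum]
    refine Finset.sum_congr rfl fun s _ => ?_
    rw [← Polynomial.smul_eq_C_mul, ← map_smul, smul_monomial, smul_eq_mul, mul_one]
  have hdeg : ∀ s ∈ F.support, s.degree = d := fun s hs => by
    by_contra h
    exact (mem_support_iff.mp hs) (hF.coeff_eq_zero h)
  constructor
  · rw [hsum]
    refine Polynomial.natDegree_sum_le_of_forall_le _ _ fun s hs => ?_
    exact (Polynomial.natDegree_C_mul_le _ _).trans (key s (hdeg s hs)).1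
  · rw [hsum, Polynomial.finsetSum_coeff, Polynomial.finsetSum_coeff, Finset.mul_sum]
    refine Finset.sum_congr rfl fun s hs => ?_
    rw [Polynomial.coeff_C_mul, Polynomial.coeff_C_mul, (key s (hdeg s hs)).2]
    ring

/-- The group law on the nodal cubic: the `3d` parameters of the intersection with a curve
of degree `d` avoiding the node have product `1`. -/
lemma roots_prod [IsAlgClosed K] {F : MvPolynomial (Fin 3) K} {d : ℕ} (hF : F.IsHomogeneous d)
    (h0 : pull F ≠ 0) (hd : (pull F).natDegree = 3 * d) : (pull F).roots.prod = 1 := by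
  have h1 := (IsAlgClosed.splits (pull F)).coeff_zero_eq_leadingCoeff_mul_prod_roots
  have h2 := (pull_homog hF).2
  have h3 : (pull F).leadingCoeff ≠ 0 := Polynomial.leadingCoeff_ne_zero.mpr h0
  rw [h1, hd, ← hd, Polynomial.coeff_natDegree, hd] at h2
  have h4 : ((-1 : K) ^ d * (-1) ^ (3 * d)) = 1 := by
    rw [← pow_add]; exact Even.neg_one_pow ⟨2 * d, by ring⟩
  have h5 : (pull F).leadingCoeff * 1 = (pull F).leadingCoeff * (pull F).roots.prod := by
    rw [mul_one]
    calc _ = _ := h2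
      _ = ((-1 : K) ^ d * (-1) ^ (3 * d)) * ((pull F).leadingCoeff * (pull F).roots.prod) := by
        ring
      _ = _ := by rw [h4, one_mul]
  exact (mul_left_cancel₀ h3 h5).symm

/-! ### Forms vanishing on the nodal cubic -/

lemma cubic_dvd_of_X_mul {i : Fin 3} (hi : i ≠ 2) {F : MvPolynomial (Fin 3) K}
    (h : cubic K ∣ X i * F) : cubic K ∣ F := by
  obtain ⟨H, hH⟩ := h
  have hp : Prime (X i : MvPolynomial (Fin 3) K) := X_prime
  have hc : ¬ (X i : MvPolynomial (Fin 3) K) ∣ cubic K := by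
    rintro ⟨Q, hQ⟩
    fin_cases i
    · have := congrArg (eval ![0, 1, 0]) hQ
      simp [cubic] at this
    · have := congrArg (eval ![1, 0, 0]) hQ
      simp [cubic] at this
    · exact hi rfl
  obtain ⟨Q, rfl⟩ := (hp.dvd_or_dvd ⟨F, hH.symm⟩).resolve_left hc
  refine ⟨Q, mul_left_cancel₀ hp.ne_zero ?_⟩
  rw [hH]; ring

lemma cubic_dvd_of_X_mul_pow {F : MvPolynomial (Fin 3) K} {n : ℕ}
    (h : cubic K ∣ (X 0 * X 1) ^ n * F) : cubic K ∣ F := by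
  induction n with
  | zero => simpa using h
  | succ n ih =>
    rw [pow_succ', mul_assoc, mul_assoc] at h
    exact ih (cubic_dvd_of_X_mul (by decide) (cubic_dvd_of_X_mul (by decide) h))

/-- A form vanishing identically on the nodal cubic is divisible by its equation. -/
lemma cubic_dvd [CharZero K] {F : MvPolynomial (Fin 3) K} {d : ℕ} (hF : F.IsHomogeneous d)
    (h : pull F = 0) : cubic K ∣ F := by
  have hz : ∀ t, eval (phi t) F = 0 := fun t => by rw [← eval_pull, h, Polynomial.eval_zero]
  -- `(XY)^d F(X, Y, Z) = F(X²Y, XY², XYZ)`, and modulo the cubic `XYZ` is `X³ - Y³`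
  let g : Fin 3 → MvPolynomial (Fin 3) K :=
    ![X 0 * (X 0 * X 1), X 1 * (X 0 * X 1), X 0 ^ 3 - X 1 ^ 3]
  have hG : aeval g F = 0 := by
    apply MvPolynomial.funext
    intro x
    have he : eval x (aeval g F) = eval (fun i => eval x (g i)) F := by
      have : ((eval x).comp (aeval g).toRingHom : MvPolynomial (Fin 3) K →+* K)
          = eval (fun i => eval x (g i)) := by
        apply MvPolynomial.ringHom_ext <;> intro <;> simp
      exact congrArg (fun f => f F) this
    rw [he, map_zero]
    by_cases hx : x 0 = 0
    · have : (fun i => eval x (g i)) = (-(x 1) ^ 3) • phi 0 := by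
        ext i; fin_cases i <;> simp [g, phi, hx]
      rw [this, eval_smul_homog hF, hz, mul_zero]
    · have : (fun i => eval x (g i)) = (x 0 ^ 3) • phi (x 1 / x 0) := by
        ext i; fin_cases i <;> simp [g, phi] <;> field_simp
      rw [this, eval_smul_homog hF, hz, mul_zero]
  have hmul : (X 0 * X 1) ^ d * F = aeval (fun i => X 0 * X 1 * X i) F := by
    apply MvPolynomial.funext
    intro x
    have he : eval x (aeval (fun i => X 0 * X 1 * X i) F)
        = eval ((x 0 * x 1) • x) F := by
      have : ((eval x).comp (aeval (fun i : Fin 3 => (X 0 * X 1 * X i :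
          MvPolynomial (Fin 3) K))).toRingHom : MvPolynomial (Fin 3) K →+* K)
          = eval ((x 0 * x 1) • x) := by
        apply MvPolynomial.ringHom_ext <;> intro <;> simp
      exact congrArg (fun f => f F) this
    rw [he, eval_smul_homog hF]
    simp
  have hdvd : cubic K ∣ (X 0 * X 1) ^ d * F := by
    rw [← sub_zero ((X 0 * X 1) ^ d * F), ← hG, hmul, ← Ideal.mem_span_singleton,
      ← Ideal.Quotient.mk_eq_mk_iff_sub_mem, ← Ideal.Quotient.mkₐ_eq_mk K]
    have : (Ideal.Quotient.mkₐ K (Ideal.span {cubic K})).comp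
        (aeval fun i => X 0 * X 1 * X i)
        = (Ideal.Quotient.mkₐ K (Ideal.span {cubic K})).comp (aeval g) := by
      apply MvPolynomial.algHom_ext
      intro i
      simp only [AlgHom.comp_apply, aeval_X, Ideal.Quotient.mkₐ_eq_mk,
        Ideal.Quotient.mk_eq_mk_iff_sub_mem, Ideal.mem_span_singleton]
      fin_cases i
      · exact ⟨0, by simp [g]; ring⟩
      · exact ⟨0, by simp [g]; ring⟩
      · exact ⟨-1, by simp [g, cubic]⟩
    exact congrArg (fun f => f F) this
  exact cubic_dvd_of_X_mul_pow hdvd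

/-! ### The linear systems with multiplicities `(m + 1, m, …, m, m - 1)` -/

/-- The prescribed multiplicities `(m + 1, m, …, m, m - 1)`. -/
def mlt (m : ℕ) (i : Fin 9) : ℕ := if i = 0 then m + 1 else if i = 8 then m - 1 else m

/-- `F` is a form of degree `3m` with multiplicity at least `mlt m i` at the point of the
nodal cubic with parameter `t i`; the zero form is allowed. -/
def Sys (t : Fin 9 → K) (m : ℕ) (F : MvPolynomial (Fin 3) K) : Prop :=
  F.IsHomogeneous (3 * m) ∧ ∀ i, MultAtLeastVec F (phi (t i)) (mlt m i)

lemma sum_mlt {m : ℕ} (hm : 1 ≤ m) : ∑ i, mlt m i = 9 * m := by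
  have : ∑ i, mlt m i = (m + 1) + m + m + m + m + m + m + m + (m - 1) :=
    Fin.sum_univ_castSucc _ |>.trans (by rw [Fin.sum_univ_eight]; rfl)
  omega

/-- The multiset of parameters in which `t i` occurs `e i` times. -/
noncomputable def paramMultiset (t : Fin 9 → K) (e : Fin 9 → ℕ) : Multiset K :=
  ∑ i, e i • ({t i} : Multiset K)

lemma card_paramMultiset (t : Fin 9 → K) (e : Fin 9 → ℕ) :
    (paramMultiset t e).card = ∑ i, e i := by
  simp [paramMultiset]

lemma prod_paramMultiset (t : Fin 9 → K) (e : Fin 9 → ℕ) :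
    (paramMultiset t e).prod = ∏ i, t i ^ e i := by
  simp [paramMultiset, Multiset.prod_sum, Multiset.prod_nsmul]

lemma count_paramMultiset [DecidableEq K] {t : Fin 9 → K} (ht : Function.Injective t)
    (e : Fin 9 → ℕ) (i : Fin 9) : (paramMultiset t e).count (t i) = e i := by
  rw [paramMultiset, Multiset.count_sum']
  simp [Multiset.count_singleton, ht.eq_iff]

lemma mem_paramMultiset {t : Fin 9 → K} {e : Fin 9 → ℕ} {a : K}
    (h : a ∈ paramMultiset t e) : ∃ i, a = t i := by
  obtain ⟨i, -, hi⟩ := Multiset.mem_sum.mp h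
  exact ⟨i, Multiset.mem_singleton.mp (Multiset.mem_of_mem_nsmul hi)⟩

lemma paramMultiset_le_roots {t : Fin 9 → K} (ht : Function.Injective t) {e : Fin 9 → ℕ}
    {f : Polynomial K} (hf : f ≠ 0)
    (h : ∀ i, (Polynomial.X - Polynomial.C (t i)) ^ e i ∣ f) :
    paramMultiset t e ≤ f.roots := by
  classical
  rw [Multiset.le_iff_count]
  intro a
  by_cases ha : a ∈ paramMultiset t e
  · obtain ⟨i, rfl⟩ := mem_paramMultiset ha
    rw [count_paramMultiset ht, Polynomial.count_roots]
    exact (Polynomial.le_rootMultiplicity_iff hf).mpr (h i)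
  · rw [Multiset.count_eq_zero_of_notMem ha]
    exact Nat.zero_le _

lemma roots_of_sys [CharZero K] {t : Fin 9 → K} (ht : Function.Injective t) {m : ℕ}
    (hm : 1 ≤ m) {F : MvPolynomial (Fin 3) K} (h : Sys t m F) (h0 : pull F ≠ 0) :
    (pull F).roots = paramMultiset t (mlt m) ∧ (pull F).natDegree = 3 * (3 * m) := by
  have h1 := paramMultiset_le_roots ht h0 fun i => pow_dvd_pull (h.2 i)
  have h2 := (pull_homog h.1).1
  have h3 := Polynomial.card_roots' (pull F)
  have h4 := Multiset.card_le_card h1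
  have h5 : (paramMultiset t (mlt m)).card = 9 * m := by rw [card_paramMultiset, sum_mlt hm]
  exact ⟨(Multiset.eq_of_le_of_card_le h1 (by omega)).symm, by omega⟩

lemma eval_pderiv_cubic {t : K} (ht : t ≠ 0) : eval (phi t) (pderiv 2 (cubic K)) ≠ 0 := by
  have : pderiv 2 (cubic K) = -(X 0 * X 1) := by
    simp [cubic, pderiv_X]
  rw [this]
  simp [phi, ht]

/-- Removing the nodal cubic from a member of the system that contains it. -/
lemma sys_of_pull_eq_zero [CharZero K] {t : Fin 9 → K} (ht0 : ∀ i, t i ≠ 0) {m : ℕ}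
    {F : MvPolynomial (Fin 3) K} (h : Sys t (m + 1) F) (h0 : pull F = 0) :
    ∃ H, F = cubic K * H ∧ Sys t m H := by
  obtain ⟨H, rfl⟩ := cubic_dvd h.1 h0
  by_cases hH : H = 0
  · refine ⟨H, rfl, by rw [hH]; exact isHomogeneous_zero _ _ _, fun i l hl => ?_⟩
    clear hl
    have : pderivs l (0 : MvPolynomial (Fin 3) K) = 0 := by
      induction l with
      | nil => rfl
      | cons i l ih => exact (congrArg (pderiv i) ih).trans (map_zero _)
    rw [hH, this, map_zero]
  have hc : (cubic K).IsHomogeneous 3 :=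
    ((isHomogeneous_X_pow 0 3).sub (isHomogeneous_X_pow 1 3)).sub
      (((isHomogeneous_X K 0).mul (isHomogeneous_X K 1)).mul (isHomogeneous_X K 2))
  have hc0 : cubic K ≠ 0 := fun hz => eval_pderiv_cubic (ht0 0) (by rw [hz]; simp)
  obtain ⟨a, b, hab, ha, hb⟩ := homog_of_mul hc0 hH h.1
  have : a = 3 := ha.inj_right hc hc0
  refine ⟨H, rfl, ?_, fun i => ?_⟩
  · have hb' : b = 3 * m := by omega
    rwa [hb'] at hb
  · refine mult_mono ?_ (mult_of_mul 2 (eval_pderiv_cubic (ht0 i)) (h.2 i))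
    unfold mlt
    split_ifs <;> omega

/-- If none of the first `N` systems can cut out its points on the cubic, then every member
contains the cubic; removing it repeatedly leaves a constant with a zero. -/
lemma sys_eq_zero [CharZero K] [IsAlgClosed K] {t : Fin 9 → K} (ht : Function.Injective t)
    (ht0 : ∀ i, t i ≠ 0) {N : ℕ} (hN : ∀ k, 1 ≤ k → k ≤ N → ∏ i, t i ^ mlt k i ≠ 1)
    {k : ℕ} (hk : k ≤ N) {F : MvPolynomial (Fin 3) K} (h : Sys t k F) : F = 0 := by
  induction k generalizing F with
  | zero =>
    have h1 := h.1
    rw [mul_zero, ← totalDegree_zero_iff_isHomogeneous, totalDegree_eq_zero_iff_eq_C] at h1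
    have h2 := h.2 0 [] (by simp [mlt])
    rw [h1] at h2 ⊢
    simpa [pderivs] using h2
  | succ k ih =>
    by_cases h0 : pull F = 0
    · obtain ⟨H, rfl, hH⟩ := sys_of_pull_eq_zero ht0 h h0
      rw [ih (by omega) hH, mul_zero]
    · obtain ⟨hr, hd⟩ := roots_of_sys ht (by omega) h h0
      have := roots_prod h.1 h0 hd
      rw [hr, prod_paramMultiset] at this
      exact absurd this (hN _ (by omega) hk)

/-! ### Existence of a member in the resonant case -/

lemma pderiv_comm (i j : Fin 3) (F : MvPolynomial (Fin 3) K) :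
    pderiv i (pderiv j F) = pderiv j (pderiv i F) := by
  ext s
  simp only [coeff_pderiv, Finsupp.add_apply]
  by_cases h : i = j
  · rw [h]
  · rw [add_right_comm, Finsupp.single_eq_of_ne (Ne.symm h), Finsupp.single_eq_of_ne h]
    push_cast
    ring

/-- The operator `∂_Y^a ∂_Z^b`. -/
noncomputable def yz (a b : ℕ) : Module.End K (MvPolynomial (Fin 3) K) :=
  (pderiv 1).toLinearMap ^ a * (pderiv 2).toLinearMap ^ b

lemma commute_pderiv (i j : Fin 3) :
    Commute ((pderiv i).toLinearMap : Module.End K (MvPolynomial (Fin 3) K))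
      (pderiv j).toLinearMap :=
  LinearMap.ext fun F => pderiv_comm i j F

lemma commute_yz (i : Fin 3) (a b : ℕ) :
    Commute ((pderiv i).toLinearMap : Module.End K (MvPolynomial (Fin 3) K)) (yz a b) :=
  ((commute_pderiv i 1).pow_right a).mul_right ((commute_pderiv i 2).pow_right b)

lemma yz_pderiv (i : Fin 3) (a b : ℕ) (F : MvPolynomial (Fin 3) K) :
    yz a b (pderiv i F) = pderiv i (yz a b F) :=
  (congrArg (fun f : Module.End K (MvPolynomial (Fin 3) K) => f F) (commute_yz i a b).eq).symm

lemma yz_succ_left (a b : ℕ) (F : MvPolynomial (Fin 3) K) :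
    yz (a + 1) b F = yz a b (pderiv 1 F) := by
  rw [yz_pderiv, yz, yz, pow_succ', mul_assoc]; rfl

lemma yz_succ_right (a b : ℕ) (F : MvPolynomial (Fin 3) K) :
    yz a (b + 1) F = yz a b (pderiv 2 F) := by
  rw [yz, yz, pow_succ, ← mul_assoc]; rfl

lemma yz_homog {F : MvPolynomial (Fin 3) K} {d : ℕ} (hF : F.IsHomogeneous d) (a b : ℕ) :
    ∃ d', (yz a b F).IsHomogeneous d' := by
  induction a generalizing F d with
  | zero =>
    induction b generalizing F d with
    | zero => exact ⟨d, by simpa [yz] using hF⟩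
    | succ b ih => rw [yz_succ_right]; exact ih hF.pderiv
  | succ a ih => rw [yz_succ_left]; exact ih hF.pderiv

lemma eval_euler {F : MvPolynomial (Fin 3) K} {d : ℕ} (hF : F.IsHomogeneous d)
    (v : Fin 3 → K) : v 0 * eval v (pderiv 0 F) + v 1 * eval v (pderiv 1 F)
      + v 2 * eval v (pderiv 2 F) = d * eval v F := by
  have := congrArg (eval v) hF.sum_X_mul_pderiv
  simpa [Fin.sum_univ_three] using this

/-- By Euler's identity the derivatives in `Y` and `Z` alone detect the multiplicity of a
form at a point with nonzero first coordinate. -/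
lemma mult_of_yz {F : MvPolynomial (Fin 3) K} {d n : ℕ} (hF : F.IsHomogeneous d)
    {v : Fin 3 → K} (hv : v 0 ≠ 0)
    (h : ∀ a b, a + b < n → eval v (yz a b F) = 0) : MultAtLeastVec F v n := by
  induction n generalizing F d with
  | zero => exact mult_zero F v
  | succ n ih =>
    refine mult_succ.mpr ⟨by simpa [yz] using h 0 0 (by omega), fun i => ih hF.pderiv ?_⟩
    intro a b hab
    have h1 : eval v (yz a b (pderiv 1 F)) = 0 := by
      rw [← yz_succ_left]; exact h _ _ (by omega)
    have h2 : eval v (yz a b (pderiv 2 F)) = 0 := by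
      rw [← yz_succ_right]; exact h _ _ (by omega)
    fin_cases i
    · obtain ⟨d', hd'⟩ := yz_homog hF a b
      have := eval_euler hd' v
      rw [← yz_pderiv, ← yz_pderiv, ← yz_pderiv, h1, h2, h a b (by omega)] at this
      simpa [hv] using this
    · exact h1
    · exact h2

/-- The last condition is automatic.  If all derivatives of order at most `n` in `Y` and `Z`
vanish, except possibly `∂_Y^n`, and the restriction to the cubic vanishes to order `n + 1`,
then `∂_Y^n F` vanishes too: in the chart `X = 1` the tangent direction of the cubic is not
the direction `Z`. -/
lemma eval_yz_of_tangent [CharZero K] {F : MvPolynomial (Fin 3) K} {d n : ℕ}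
    (hF : F.IsHomogeneous d) {t : K} (ht : t ≠ 0)
    (h : ∀ a b, a + b ≤ n → b ≠ 0 ∨ a < n → eval (phi t) (yz a b F) = 0)
    (hp : (Polynomial.X - Polynomial.C t) ^ (n + 1) ∣ pull F) :
    eval (phi t) (yz n 0 F) = 0 := by
  induction n generalizing F d with
  | zero =>
    have : (Polynomial.X - Polynomial.C t) ∣ pull F := by simpa using hp
    rw [Polynomial.dvd_iff_isRoot, Polynomial.IsRoot, eval_pull] at this
    simpa [yz] using this
  | succ n ih =>
    rw [yz_succ_left]
    refine ih hF.pderiv ?_ ?_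
    · intro a b hab hn
      rw [← yz_succ_left]
      exact h _ _ (by omega) (by omega)
    · have hz : (Polynomial.X - Polynomial.C t) ^ (n + 1) ∣ pull (pderiv 2 F) := by
        refine pow_dvd_pull (mult_of_yz hF.pderiv (by simpa [phi] using ht) fun a b hab => ?_)
        rw [← yz_succ_right]
        exact h _ _ (by omega) (by omega)
      have hd : (Polynomial.X - Polynomial.C t) ^ (n + 1) ∣
          Polynomial.derivative (pull F) := by
        obtain ⟨q, hq⟩ := hp
        rw [hq, Polynomial.derivative_mul, Polynomial.derivative_X_sub_C_pow]
        refine dvd_add ⟨Polynomial.C ((n + 1 + 1 : ℕ) : K) * q, ?_⟩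
          ((pow_dvd_pow _ (by omega)).mul_right _)
        simp only [Nat.add_sub_cancel]
        ring
      have hp' : (Polynomial.X - Polynomial.C t) ^ (n + 1) ∣ pull F :=
        (pow_dvd_pow _ (by omega)).trans hp
      have heul := congrArg pull hF.sum_X_mul_pderiv
      simp only [Fin.sum_univ_three, map_add, map_mul, map_nsmul] at heul
      have hX0 : pull (X 0 : MvPolynomial (Fin 3) K) = Polynomial.X := by simp [pull]
      have hX1 : pull (X 1 : MvPolynomial (Fin 3) K) = Polynomial.X ^ 2 := by simp [pull]
      have hX2 : pull (X 2 : MvPolynomial (Fin 3) K) = 1 - Polynomial.X ^ 3 := by simp [pull]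
      rw [hX0, hX1, hX2, nsmul_eq_mul] at heul
      rw [derivative_pull] at hd
      -- eliminating `∂_X F` between Euler's identity and the chain rule
      have key : Polynomial.X ^ 2 * pull (pderiv 1 F) =
          Polynomial.X * (pull (pderiv 0 F) + 2 * Polynomial.X * pull (pderiv 1 F)
            - 3 * Polynomial.X ^ 2 * pull (pderiv 2 F)) - (d : Polynomial K) * pull F
            + (1 + 2 * Polynomial.X ^ 3) * pull (pderiv 2 F) := by
        rw [← heul]; ring
      have hdvd : (Polynomial.X - Polynomial.C t) ^ (n + 1) ∣
          Polynomial.X ^ 2 * pull (pderiv 1 F) := by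
        rw [key]
        exact dvd_add (dvd_sub (hd.mul_left _) (hp'.mul_left _)) (hz.mul_left _)
      refine IsCoprime.dvd_of_dvd_mul_left ?_ hdvd
      refine IsCoprime.pow ?_
      have := Polynomial.isCoprime_X_sub_C_of_isUnit_sub (a := t) (b := 0) (by simpa using ht)
      simpa using this

/-- The triangle of pairs `(k, j)` with `j ≤ k < n`; a pair stands for the monomial or
the differential operator with exponents `k - j` in `Y` and `j` in `Z`. -/
def tri (n : ℕ) : Finset (Σ _ : ℕ, ℕ) := (Finset.range n).sigma fun k => Finset.range (k + 1)

lemma card_tri (n : ℕ) : 2 * (tri n).card = n * (n + 1) := by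
  rw [tri, Finset.card_sigma]
  simp only [Finset.card_range]
  induction n with
  | zero => simp
  | succ n ih => rw [Finset.sum_range_succ, mul_add, ih]; ring

lemma mem_tri {n : ℕ} {x : Σ _ : ℕ, ℕ} : x ∈ tri n ↔ x.1 < n ∧ x.2 ≤ x.1 := by
  simp [tri]

/-- The exponents of the monomial of degree `d` labelled by `x`. -/
noncomputable def expo (d : ℕ) (x : Σ _ : ℕ, ℕ) : Fin 3 →₀ ℕ :=
  Finsupp.equivFunOnFinite.symm ![d - x.1, x.1 - x.2, x.2]

/-- The form of degree `d` with given coefficients. -/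
noncomputable def formOf (d : ℕ) : (tri (d + 1) → K) →ₗ[K] MvPolynomial (Fin 3) K :=
  ∑ x : tri (d + 1), (monomial (expo d x)).comp (LinearMap.proj x)

lemma formOf_apply (d : ℕ) (c : tri (d + 1) → K) :
    formOf d c = ∑ x : tri (d + 1), monomial (expo d x) (c x) := by
  simp [formOf]

lemma formOf_homog (d : ℕ) (c : tri (d + 1) → K) : (formOf d c).IsHomogeneous d := by
  rw [formOf_apply]
  refine IsHomogeneous.sum _ _ _ fun x _ => isHomogeneous_monomial _ ?_
  have := mem_tri.mp x.2
  rw [Finsupp.degree_eq_sum, Fin.sum_univ_three]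
  simp [expo]
  omega

lemma formOf_injective (d : ℕ) : Function.Injective (formOf (K := K) d) := by
  classical
  rw [← LinearMap.ker_eq_bot, LinearMap.ker_eq_bot']
  intro c hc
  ext y
  have h := congrArg (coeff (expo d y)) hc
  rw [formOf_apply, coeff_sum, Finset.sum_eq_single y] at h
  · simpa using h
  · intro x _ hxy
    rw [coeff_monomial, if_neg]
    intro he
    apply hxy
    have h1 := DFunLike.congr_fun he 1
    have h2 := DFunLike.congr_fun he 2
    simp [expo] at h1 h2
    have hx := mem_tri.mp x.2
    have hy := mem_tri.mp y.2
    obtain ⟨⟨x1, x2⟩, hxm⟩ := x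
    obtain ⟨⟨y1, y2⟩, hym⟩ := y
    simp at h1 h2 hx hy ⊢
    omega
  · simp

/-- The labels of the differential conditions imposed at the `i`-th point: all of order less
than `mlt m i`, with `∂_Y^m` left out at the first point. -/
def conds (m : ℕ) (i : Fin 9) : Finset (Σ _ : ℕ, ℕ) :=
  if i = 0 then (tri (m + 1)).erase ⟨m, 0⟩ else tri (mlt m i)

lemma card_conds (m : ℕ) (hm : 1 ≤ m) :
    ∑ i, (conds m i).card < (tri (3 * m + 1)).card := by
  have h : ∑ i, (conds m i).card = ((tri (m + 1)).erase ⟨m, 0⟩).card + (tri m).card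
      + (tri m).card + (tri m).card + (tri m).card + (tri m).card + (tri m).card
      + (tri m).card + (tri (m - 1)).card :=
    Fin.sum_univ_castSucc _ |>.trans (by rw [Fin.sum_univ_eight]; rfl)
  have he : (⟨m, 0⟩ : Σ _ : ℕ, ℕ) ∈ tri (m + 1) := mem_tri.mpr (by simp)
  have h0 := Finset.card_erase_add_one he
  have h1 := card_tri (m + 1)
  have h2 := card_tri m
  have h3 := card_tri (m - 1)
  have h4 := card_tri (3 * m + 1)
  obtain ⟨n, rfl⟩ : ∃ n, m = n + 1 := ⟨m - 1, by omega⟩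
  simp only [Nat.add_sub_cancel] at *
  rw [h]
  nlinarith

/-- When the prescribed points and multiplicities are cut out on the cubic, the system has a
nonzero member: one of the linear conditions follows from the others. -/
lemma exists_sys [CharZero K] [IsAlgClosed K] {t : Fin 9 → K} (ht : Function.Injective t)
    (ht0 : ∀ i, t i ≠ 0) {m : ℕ} (hm : 1 ≤ m) (hprod : ∏ i, t i ^ mlt m i = 1) :
    ∃ F : MvPolynomial (Fin 3) K, F ≠ 0 ∧ Sys t m F := by
  classical
  let Φ : (tri (3 * m + 1) → K) →ₗ[K] ((Σ i, conds m i) → K) :=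
    LinearMap.pi fun q => ((MvPolynomial.aeval (phi (t q.1))).toLinearMap).comp
      ((yz (q.2.1.1 - q.2.1.2) q.2.1.2).comp (formOf (3 * m)))
  have hker : LinearMap.ker Φ ≠ ⊥ := by
    apply LinearMap.ker_ne_bot_of_finrank_lt
    simpa using card_conds m hm
  obtain ⟨c, hc, hc0⟩ := (Submodule.ne_bot_iff _).mp hker
  have hF0 : formOf (3 * m) c ≠ 0 := fun h =>
    hc0 (formOf_injective _ (h.trans (map_zero _).symm))
  have hFh := formOf_homog (3 * m) c
  have hv : ∀ i, phi (t i) 0 ≠ 0 := fun i => by simpa [phi] using ht0 i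
  have hcond : ∀ i a b, (⟨a + b, b⟩ : Σ _ : ℕ, ℕ) ∈ conds m i →
      eval (phi (t i)) (yz a b (formOf (3 * m) c)) = 0 := by
    intro i a b hab
    have := congrFun (LinearMap.mem_ker.mp hc) ⟨i, ⟨_, hab⟩⟩
    simpa [Φ, aeval_eq_eval] using this
  generalize formOf (3 * m) c = F at *
  have hother : ∀ i, i ≠ 0 → MultAtLeastVec F (phi (t i)) (mlt m i) := by
    intro i hi
    refine mult_of_yz hFh (hv i) fun a b hab => hcond i a b ?_
    rw [conds, if_neg hi, mem_tri]
    exact ⟨hab, Nat.le_add_left _ _⟩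
  have hzero : ∀ a b, a + b ≤ m → b ≠ 0 ∨ a < m → eval (phi (t 0)) (yz a b F) = 0 := by
    intro a b hab hn
    refine hcond 0 a b ?_
    rw [conds, if_pos rfl, Finset.mem_erase, mem_tri]
    refine ⟨fun h => ?_, by simp; omega⟩
    simp only [Sigma.mk.injEq, heq_eq_eq] at h
    omega
  have hm0 : MultAtLeastVec F (phi (t 0)) m :=
    mult_of_yz hFh (hv 0) fun a b hab => hzero a b hab.le (by omega)
  have hdvd : (Polynomial.X - Polynomial.C (t 0)) ^ (m + 1) ∣ pull F := by
    by_cases h0 : pull F = 0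
    · simp [h0]
    -- one intersection parameter is left over, and the group law forces it to be `t 0`
    let e : Fin 9 → ℕ := fun i => if i = 0 then m else mlt m i
    have hle : paramMultiset t e ≤ (pull F).roots := by
      refine paramMultiset_le_roots ht h0 fun i => ?_
      by_cases hi : i = 0
      · subst hi; simpa [e] using pow_dvd_pull hm0
      · simpa [e, hi] using pow_dvd_pull (hother i hi)
    have hadd : paramMultiset t e + {t 0} = paramMultiset t (mlt m) := by
      have : ∀ i, mlt m i • ({t i} : Multiset K)
          = e i • ({t i} : Multiset K) + if i = 0 then {t 0} else 0 := by
        intro i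
        by_cases hi : i = 0
        · subst hi; simp [e, mlt, add_smul]
        · simp [e, hi]
      rw [paramMultiset, paramMultiset, Finset.sum_congr rfl fun i _ => this i,
        Finset.sum_add_distrib]
      simp
    have hcard := congrArg Multiset.card hadd
    rw [Multiset.card_add, Multiset.card_singleton, card_paramMultiset t (mlt m),
      sum_mlt hm] at hcard
    obtain ⟨u, hu⟩ := Multiset.le_iff_exists_add.mp hle
    have hucard := congrArg Multiset.card hu
    rw [Multiset.card_add, IsAlgClosed.card_roots_eq_natDegree] at hucard
    have hdeg := pull_homog hFh
    have hu1 : u.card = 1 := by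
      by_contra hne
      have hu0 : u = 0 := Multiset.card_eq_zero.mp (by omega)
      have hz : (pull F).coeff 0 = 0 := by
        have := hdeg.2
        rw [Polynomial.coeff_eq_zero_of_natDegree_lt (by rw [hu0] at hucard; simp at hucard; omega)]
          at this
        simpa using this.symm
      have : (0 : K) ∈ (pull F).roots := by
        rw [Polynomial.mem_roots h0, Polynomial.IsRoot, ← Polynomial.coeff_zero_eq_eval_zero, hz]
      rw [hu, hu0, add_zero] at this
      obtain ⟨i, hi⟩ := mem_paramMultiset this
      exact ht0 i hi.symm
    obtain ⟨s, rfl⟩ := Multiset.card_eq_one.mp hu1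
    have hrp := roots_prod hFh h0 (by omega)
    have hpp := prod_paramMultiset t (mlt m)
    rw [hprod, ← hadd, Multiset.prod_add, Multiset.prod_singleton] at hpp
    rw [hu, Multiset.prod_add, Multiset.prod_singleton, ← hpp] at hrp
    have hne : (paramMultiset t e).prod ≠ 0 := fun h => by simp [h] at hpp
    have hs := mul_left_cancel₀ hne hrp
    rw [← Polynomial.le_rootMultiplicity_iff h0, ← Polynomial.count_roots, hu, hs, hadd,
      count_paramMultiset ht]
    simp [mlt]
  refine ⟨F, hF0, hFh, fun i => ?_⟩
  by_cases hi : i = 0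
  · subst hi
    refine mult_of_yz hFh (hv 0) fun a b hab => ?_
    have hab' : a + b ≤ m := by simp [mlt] at hab; omega
    by_cases hc' : b ≠ 0 ∨ a < m
    · exact hzero a b hab' hc'
    · obtain ⟨rfl, rfl⟩ : b = 0 ∧ a = m := by omega
      exact eval_yz_of_tangent hFh (ht0 0) hzero hdvd
  · exact hother i hi

/-! ### Genericity of the absence of a curve -/

/-- The labels of the monomials of degree `d` in three variables. -/
abbrev Mon (d : ℕ) : Type := ↥((Finset.univ : Finset (Fin 3)).finsuppAntidiag d)

/-- The labels of the differential conditions imposed by `Sys` at nine points: a point and a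
list of directions of length less than the prescribed multiplicity. -/
abbrev Cond (m : ℕ) : Type := {x : Fin 9 × List (Fin 3) // x.2.length < mlt m x.1}

lemma mon_degree {d : ℕ} (s : Mon d) : (s : Fin 3 →₀ ℕ).degree = d := by
  rw [Finsupp.degree_eq_sum]
  exact (Finset.mem_finsuppAntidiag.mp s.2).1

lemma eq_sum_mon {F : MvPolynomial (Fin 3) K} {d : ℕ} (hF : F.IsHomogeneous d) :
    F = ∑ s : Mon d, coeff (s : Fin 3 →₀ ℕ) F • monomial (s : Fin 3 →₀ ℕ) (1 : K) := by
  classical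
  ext u
  simp only [coeff_sum, coeff_smul, coeff_monomial, smul_eq_mul, mul_ite, mul_one, mul_zero]
  by_cases hu : u ∈ (Finset.univ : Finset (Fin 3)).finsuppAntidiag d
  · rw [Finset.sum_eq_single ⟨u, hu⟩]
    · simp
    · intro s _ hs
      rw [if_neg fun h => hs (Subtype.ext h)]
    · simp
  · rw [Finset.sum_eq_zero]
    · by_contra h
      apply hu
      have := hF h
      rw [show (1 : Fin 3 → ℕ) = fun _ => 1 from rfl, ← Finsupp.degree_eq_weight_one,
        Finsupp.degree_eq_sum] at this
      exact Finset.mem_finsuppAntidiag.mpr ⟨this, Finset.subset_univ _⟩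
    · intro s _
      rw [if_neg]
      rintro rfl
      exact hu s.2

lemma pderivs_sum_smul {ι : Type} (A : Finset ι) (l : List (Fin 3)) (c : ι → K)
    (f : ι → MvPolynomial (Fin 3) K) :
    pderivs l (∑ i ∈ A, c i • f i) = ∑ i ∈ A, c i • pderivs l (f i) := by
  induction l with
  | nil => rfl
  | cons j l ih =>
    change pderiv j (pderivs l _) = ∑ i ∈ A, c i • pderiv j (pderivs l (f i))
    rw [ih, map_sum]
    simp

/-- The value of the condition `x` on the monomial `s`, for points with coordinates `v`. -/
noncomputable def row (m : ℕ) (v : Fin 9 → Fin 3 → K) (x : Cond m) (s : Mon (3 * m)) : K :=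
  eval (v x.1.1) (pderivs x.1.2 (monomial (s : Fin 3 →₀ ℕ) (1 : K)))

lemma sum_row (m : ℕ) (v : Fin 9 → Fin 3 → K) (x : Cond m) (c : Mon (3 * m) → K) :
    ∑ s, row m v x s * c s = eval (v x.1.1)
      (pderivs x.1.2 (∑ s, c s • monomial (s : Fin 3 →₀ ℕ) (1 : K))) := by
  rw [pderivs_sum_smul, map_sum]
  refine Finset.sum_congr rfl fun s _ => ?_
  rw [smul_eval, row, mul_comm]

/-- A nonvanishing maximal minor of the matrix of conditions, if the conditions at the points
`v` have only the trivial solution. -/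
lemma exists_minor {m : ℕ} {v : Fin 9 → Fin 3 → K}
    (hv : ∀ F : MvPolynomial (Fin 3) K, F.IsHomogeneous (3 * m) →
      (∀ i, MultAtLeastVec F (v i) (mlt m i)) → F = 0) :
    ∃ r : Mon (3 * m) → Cond m, (Matrix.of fun a => row m v (r a)).det ≠ 0 := by
  classical
  have hspan : Submodule.span K (Set.range (row m v)) = ⊤ := by
    by_contra hne
    obtain ⟨f, hf0, hf⟩ := Submodule.exists_le_ker_of_lt_top _ (lt_top_iff_ne_top.mpr hne)
    have hfs : ∀ g : Mon (3 * m) → K, f g = ∑ s, g s * f (Pi.single s 1) := by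
      intro g
      conv_lhs => rw [pi_eq_sum_univ' g]
      rw [map_sum]
      refine Finset.sum_congr rfl fun s _ => ?_
      rw [map_smul, smul_eq_mul]
    have hF : ∑ s : Mon (3 * m), f (Pi.single s 1) • monomial (s : Fin 3 →₀ ℕ) (1 : K) = 0 := by
      apply hv
      · refine IsHomogeneous.sum _ _ _ fun s _ => ?_
        rw [smul_monomial]
        exact isHomogeneous_monomial _ (mon_degree s)
      · intro i l hl
        rw [← sum_row m v ⟨(i, l), hl⟩ fun s => f (Pi.single s 1), ← hfs]
        exact hf (Submodule.subset_span ⟨_, rfl⟩)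
    apply hf0
    refine LinearMap.ext fun g => ?_
    rw [LinearMap.zero_apply, hfs]
    refine Finset.sum_eq_zero fun s _ => ?_
    have := congrArg (coeff (s : Fin 3 →₀ ℕ)) hF
    simp only [coeff_sum, coeff_smul, coeff_monomial, smul_eq_mul, mul_ite, mul_one, mul_zero,
      coeff_zero] at this
    rw [Finset.sum_eq_single s] at this
    · rw [if_pos rfl] at this
      rw [this, mul_zero]
    · intro s' _ hs
      rw [if_neg fun h => hs (Subtype.ext h)]
    · simp
  obtain ⟨κ, a, -, ha, hli⟩ := exists_linearIndependent' K (row m v)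
  have : Finite κ := hli.finite
  have : Fintype κ := Fintype.ofFinite κ
  let b := Module.Basis.mk hli (by rw [ha, hspan])
  have hcard : Fintype.card κ = Fintype.card (Mon (3 * m)) := by
    rw [← Module.finrank_eq_card_basis b, Module.finrank_fintype_fun_eq_card]
  let e : Mon (3 * m) ≃ κ := (Fintype.equivOfCardEq hcard).symm
  refine ⟨a ∘ e, ?_⟩
  have h2 : LinearIndependent K (Matrix.of fun s => row m v ((a ∘ e) s)).row :=
    hli.comp e e.injective
  rw [Matrix.linearIndependent_rows_iff_isUnit, Matrix.isUnit_iff_isUnit_det] at h2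
  exact h2.ne_zero

/-- The condition `x` on the monomial `s` as a polynomial in the coordinates of nine points. -/
noncomputable def rowPoly (m : ℕ) (x : Cond m) (s : Mon (3 * m)) :
    MvPolynomial (Fin 9 × Fin 3) K :=
  rename (fun j => (x.1.1, j)) (pderivs x.1.2 (monomial (s : Fin 3 →₀ ℕ) (1 : K)))

lemma eval_rowPoly (m : ℕ) (x : Cond m) (s : Mon (3 * m)) (v : Fin 9 → Fin 3 → K) :
    eval (fun q : Fin 9 × Fin 3 => v q.1 q.2) (rowPoly m x s) = row m v x s := by
  rw [rowPoly, eval_rename]; rfl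

lemma eval_det_rowPoly (m : ℕ) (r : Mon (3 * m) → Cond m) (v : Fin 9 → Fin 3 → K) :
    eval (fun q : Fin 9 × Fin 3 => v q.1 q.2)
      (Matrix.of fun a => rowPoly (K := K) m (r a)).det
      = (Matrix.of fun a => row m v (r a)).det := by
  rw [RingHom.map_det]
  congr 1
  ext a s
  exact eval_rowPoly m (r a) s v

/-- The weight picking out the coordinates of the `i`-th point. -/
def wt (i : Fin 9) (q : Fin 9 × Fin 3) : ℕ := if q.1 = i then 1 else 0

lemma weight_wt (i : Fin 9) (u : Fin 9 × Fin 3 →₀ ℕ) :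
    Finsupp.weight (wt i) u = ∑ j, u (i, j) := by
  rw [Finsupp.weight_apply, Finsupp.sum_fintype _ _ (by simp), Fintype.sum_prod_type,
    Finset.sum_eq_single i]
  · simp [wt]
  · intro k _ hk
    simp [wt, hk]
  · simp

lemma rowPoly_homog (m : ℕ) (x : Cond m) (s : Mon (3 * m)) (i : Fin 9) :
    IsWeightedHomogeneous (wt i) (rowPoly (K := K) m x s)
      (if x.1.1 = i then 3 * m - x.1.2.length else 0) := by
  intro u hu
  obtain ⟨w, rfl, hw⟩ := coeff_rename_ne_zero _ _ _ hu
  have := pderivs_homog (isHomogeneous_monomial (1 : K) (mon_degree s)) x.1.2 hw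
  rw [show (1 : Fin 3 → ℕ) = fun _ => 1 from rfl, ← Finsupp.degree_eq_weight_one,
    Finsupp.degree_eq_sum] at this
  rw [weight_wt]
  split_ifs with h
  · rw [← this, ← h]
    refine Finset.sum_congr rfl fun j _ => ?_
    exact Finsupp.mapDomain_apply (fun a b hab => (Prod.ext_iff.mp hab).2) w j
  · refine Finset.sum_eq_zero fun j _ => Finsupp.mapDomain_of_notMem_range _ _ ?_
    rintro ⟨k, hk⟩
    exact h (Prod.ext_iff.mp hk).1

/-- If the conditions have only the trivial solution at one tuple of vectors, they have only
the trivial solution generically. -/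
lemma generic_of_point {m : ℕ} {v : Fin 9 → Fin 3 → K}
    (hv : ∀ F : MvPolynomial (Fin 3) K, F.IsHomogeneous (3 * m) →
      (∀ i, MultAtLeastVec F (v i) (mlt m i)) → F = 0) :
    GenericTuple K 9 fun p => ∀ F : MvPolynomial (Fin 3) K, F.IsHomogeneous (3 * m) →
      (∀ i, MultAtLeast F (p i) (mlt m i)) → F = 0 := by
  classical
  obtain ⟨r, hr⟩ := exists_minor hv
  refine ⟨(Matrix.of fun a => rowPoly (K := K) m (r a)).det,
    fun i => ∑ a, if (r a).1.1 = i then 3 * m - (r a).1.2.length else 0, ?_, ?_, ?_⟩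
  · intro h
    rw [← eval_det_rowPoly, h, map_zero] at hr
    exact hr rfl
  · intro u hu i
    rw [← weight_wt]
    have : IsWeightedHomogeneous (wt i) (Matrix.of fun a => rowPoly (K := K) m (r a)).det
        (∑ a, if (r a).1.1 = i then 3 * m - (r a).1.2.length else 0) := by
      rw [Matrix.det_apply]
      refine IsWeightedHomogeneous.sum _ _ _ fun σ _ => ?_
      rw [← Equiv.sum_comp σ, Units.smul_def, ← Int.cast_smul_eq_zsmul K]
      exact (weightedHomogeneousSubmodule K (wt i) _).smul_mem _
        (IsWeightedHomogeneous.prod _ _ _ fun b _ => rowPoly_homog m (r (σ b)) b i)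
    exact this (mem_support_iff.mp hu)
  · intro p _ hp F hF hmult
    rw [eval_det_rowPoly m r fun i => (p i).rep] at hp
    have hc : (fun s : Mon (3 * m) => coeff (s : Fin 3 →₀ ℕ) F) = 0 := by
      apply Matrix.eq_zero_of_mulVec_eq_zero hp
      ext a
      have := sum_row m (fun i => (p i).rep) (r a) fun s => coeff (s : Fin 3 →₀ ℕ) F
      rw [← eq_sum_mon hF, hmult (r a).1.1 _ (r a).2] at this
      exact this
    rw [eq_sum_mon hF]
    refine Finset.sum_eq_zero fun s _ => ?_
    rw [show coeff (s : Fin 3 →₀ ℕ) F = 0 from congrFun hc s, zero_smul]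

lemma mlt_conditions {m : ℕ} {P : Fin 9 → ℕ → Prop} :
    (∀ i, P i (mlt m i)) ↔
      P 0 (m + 1) ∧ (∀ i : Fin 9, i ≠ 0 → i ≠ 8 → P i m) ∧ P 8 (m - 1) := by
  constructor
  · intro h
    refine ⟨by simpa [mlt] using h 0, fun i h0 h8 => by simpa [mlt, h0, h8] using h i,
      by simpa [mlt] using h 8⟩
  · rintro ⟨h0, h, h8⟩ i
    by_cases hi0 : i = 0
    · subst hi0; simpa [mlt] using h0
    by_cases hi8 : i = 8
    · subst hi8; simpa [mlt] using h8
    simpa [mlt, hi0, hi8] using h i hi0 hi8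

/-- There are no curves for the parameters `2, 4, 8, …`: every relation
`∏ t i ^ mlt k i = 1` with `k ≥ 1` fails. -/
lemma generic_part [CharZero K] [IsAlgClosed K] {m : ℕ} :
    GenericTuple K 9 fun p => ∀ F : MvPolynomial (Fin 3) K, F.IsHomogeneous (3 * m) →
      (∀ i, MultAtLeast F (p i) (mlt m i)) → F = 0 := by
  have hpow : Function.Injective fun n : ℕ => (2 : K) ^ n := by
    intro a b h
    have : ((2 ^ a : ℕ) : K) = (2 ^ b : ℕ) := by push_cast; exact h
    exact Nat.pow_right_injective le_rfl (Nat.cast_injective this)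
  apply generic_of_point (v := fun i => phi ((2 : K) ^ (i.val + 1)))
  intro F hF h
  refine sys_eq_zero (t := fun i => (2 : K) ^ (i.val + 1)) (N := m) ?_ ?_ ?_ le_rfl ⟨hF, h⟩
  · intro i j hij
    have := hpow hij
    exact Fin.ext (by simpa using this)
  · intro i
    exact pow_ne_zero _ two_ne_zero
  · intro k hk _ he
    simp_rw [← pow_mul] at he
    rw [Finset.prod_pow_eq_pow_sum] at he
    have h0 := hpow (he.trans (pow_zero _).symm)
    have := Finset.sum_eq_zero_iff.mp h0 0 (Finset.mem_univ _)
    simp [mlt] at this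

/-! ### Parameters with exactly one multiplicative relation -/

/-- Eight distinct primes. -/
def prm : Fin 8 → ℕ := ![2, 3, 5, 7, 11, 13, 17, 19]

lemma prm_prime (j : Fin 8) : (prm j).Prime := by
  fin_cases j <;> simp [prm] <;> norm_num

lemma prm_injective : Function.Injective prm := by decide

lemma prm_independent [CharZero K] {c : Fin 8 → ℤ} (h : ∏ j, (prm j : K) ^ c j = 1) : c = 0 := by
  have hQ : ∏ j, (prm j : ℚ) ^ c j = 1 := by
    have : ((∏ j, (prm j : ℚ) ^ c j : ℚ) : K) = ((1 : ℚ) : K) := by push_cast; exact h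
    exact_mod_cast this
  ext k
  have : Fact (prm k).Prime := ⟨prm_prime k⟩
  have hne : ∀ j, (prm j : ℚ) ≠ 0 := fun j => by exact_mod_cast (prm_prime j).ne_zero
  -- the `prm k`-adic valuation reads off the exponent of `prm k`
  have hval : ∀ A : Finset (Fin 8), padicValRat (prm k) (∏ j ∈ A, (prm j : ℚ) ^ c j)
      = ∑ j ∈ A, if j = k then c k else 0 := by
    intro A
    induction A using Finset.induction_on with
    | empty => simp
    | insert a A ha ih =>
      rw [Finset.prod_insert ha, Finset.sum_insert ha, padicValRat.mul (zpow_ne_zero _ (hne a))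
        (Finset.prod_ne_zero_iff.mpr fun j _ => zpow_ne_zero _ (hne j)), ih, padicValRat.zpow]
      congr 1
      by_cases hak : a = k
      · subst hak
        rw [padicValRat.self (prm_prime _).one_lt, if_pos rfl, mul_one]
      · have : Fact (prm a).Prime := ⟨prm_prime a⟩
        rw [if_neg hak, padicValRat.of_nat,
          padicValNat_primes fun h => hak (prm_injective h.symm)]
        simp
  have := hval Finset.univ
  rw [hQ] at this
  simpa using this.symm

/-- The exponents of the parameters. The rows span a lattice of rank eight, and the relations
between them are the multiples of `mlt m`. -/
def expM (m : ℤ) : Fin 9 → Fin 8 → ℤ :=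
  ![![1, 0, 0, 0, 0, 0, 0, 0], ![0, 1, 0, 0, 0, 0, 0, 0], ![0, 0, 1, 0, 0, 0, 0, 0],
    ![0, 0, 0, 1, 0, 0, 0, 0], ![0, 0, 0, 0, 1, 0, 0, 0], ![0, 0, 0, 0, 0, 1, 0, 0],
    ![0, 0, 0, 0, 0, 0, 1, 0], ![-2, -1, -1, -1, -1, -1, -1, 1 - m], ![1, 0, 0, 0, 0, 0, 0, m]]

lemma sum_expM (m : ℤ) (a : Fin 9 → ℤ) (j : Fin 8) :
    ∑ i, a i * expM m i j = a 0 * expM m 0 j + a 1 * expM m 1 j + a 2 * expM m 2 j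
      + a 3 * expM m 3 j + a 4 * expM m 4 j + a 5 * expM m 5 j + a 6 * expM m 6 j
      + a 7 * expM m 7 j + a 8 * expM m 8 j :=
  Fin.sum_univ_castSucc _ |>.trans (by rw [Fin.sum_univ_eight]; rfl)

lemma expM_injective {m : ℤ} (hm : 1 ≤ m) : Function.Injective (expM m) := by
  intro i i' h
  have h0 := congrFun h 0
  have h1 := congrFun h 1
  have h2 := congrFun h 2
  have h3 := congrFun h 3
  have h4 := congrFun h 4
  have h5 := congrFun h 5
  have h6 := congrFun h 6
  have h7 := congrFun h 7
  clear h
  fin_cases i <;> fin_cases i' <;> first | rfl | (simp [expM] at h0 h1 h2 h3 h4 h5 h6 h7; try omega)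

lemma expM_relation {m : ℕ} (hm : 1 ≤ m) :
    ∀ j, ∑ i, (mlt m i : ℤ) * expM m i j = 0 := by
  intro j
  rw [sum_expM]
  have h8 : (mlt m 8 : ℤ) = m - 1 := by simp [mlt]; omega
  rw [h8]
  fin_cases j <;> simp [expM, mlt] <;> ring

lemma expM_relations {m : ℕ} (hm : 1 ≤ m) {a : Fin 9 → ℕ}
    (h : ∀ j, ∑ i, (a i : ℤ) * expM m i j = 0) : ∃ k, ∀ i, a i = k * mlt m i := by
  have hs := fun j => (sum_expM m (fun i => (a i : ℤ)) j).symm.trans (h j)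
  have h0 := hs 0
  have h1 := hs 1
  have h2 := hs 2
  have h3 := hs 3
  have h4 := hs 4
  have h5 := hs 5
  have h6 := hs 6
  have h7 := hs 7
  simp [expM] at h0 h1 h2 h3 h4 h5 h6 h7
  obtain ⟨n, rfl⟩ : ∃ n, m = n + 1 := ⟨m - 1, by omega⟩
  have h7' : n * a 7 = (n + 1) * a 8 := by
    push_cast at h7
    zify
    linarith
  have hdvd : n + 1 ∣ a 7 :=
    (Nat.coprime_self_add_left.mpr (Nat.coprime_one_left n) : (n + 1).Coprime n).dvd_of_dvd_mul_left
      ⟨_, h7'⟩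
  obtain ⟨k, hk⟩ := hdvd
  have h8 : a 8 = k * n := by
    rw [hk] at h7'
    have : (n + 1) * (k * n) = (n + 1) * a 8 := by rw [← h7']; ring
    exact (Nat.eq_of_mul_eq_mul_left (Nat.succ_pos n) this).symm
  refine ⟨k, (mlt_conditions (P := fun i e => a i = k * e)).mpr ⟨?_, fun i hi0 hi8 => ?_, ?_⟩⟩
  · have : a 0 + a 8 = 2 * a 7 := by omega
    rw [h8, hk] at this
    linarith
  · have : a i = a 7 := by
      fin_cases i <;> simp at hi0 hi8 ⊢ <;> omega
    rw [this, hk, mul_comm]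
  · simpa using h8

lemma exists_params (K : Type) [Field K] [CharZero K] {m : ℕ} (hm : 1 ≤ m) :
    ∃ t : Fin 9 → K, Function.Injective t ∧ (∀ i, t i ≠ 0) ∧ ∏ i, t i ^ mlt m i = 1 ∧
      ∀ a : Fin 9 → ℕ, ∏ i, t i ^ a i = 1 → ∃ k, ∀ i, a i = k * mlt m i := by
  have hne : ∀ j, (prm j : K) ≠ 0 := fun j => by exact_mod_cast (prm_prime j).ne_zero
  let t : Fin 9 → K := fun i => ∏ j, (prm j : K) ^ expM m i j
  have ht0 : ∀ i, t i ≠ 0 := fun i => Finset.prod_ne_zero_iff.mpr fun j _ => zpow_ne_zero _ (hne j)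
  have hprod : ∀ a : Fin 9 → ℕ,
      ∏ i, t i ^ a i = ∏ j, (prm j : K) ^ ∑ i, (a i : ℤ) * expM m i j := by
    intro a
    simp_rw [t, ← Finset.prod_pow]
    rw [Finset.prod_comm]
    refine Finset.prod_congr rfl fun j _ => ?_
    have : ∀ A : Finset (Fin 9), ∏ i ∈ A, ((prm j : K) ^ expM m i j) ^ a i
        = (prm j : K) ^ ∑ i ∈ A, (a i : ℤ) * expM m i j := by
      intro A
      induction A using Finset.induction_on with
      | empty => simp
      | insert b A hb ih =>
        rw [Finset.prod_insert hb, Finset.sum_insert hb, zpow_add₀ (hne j), ih, mul_comm (a b : ℤ),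
          zpow_mul, zpow_natCast]
    exact this _
  refine ⟨t, ?_, ht0, ?_, ?_⟩
  · intro i i' h
    apply expM_injective (m := m) (by exact_mod_cast hm)
    have : ∏ j, (prm j : K) ^ (expM m i j - expM m i' j) = 1 := by
      simp_rw [zpow_sub₀ (hne _)]
      rw [Finset.prod_div_distrib]
      exact (div_eq_one_iff_eq (ht0 i')).mpr h
    funext j
    exact sub_eq_zero.mp (congrFun (prm_independent this) j)
  · rw [hprod]
    simp [expM_relation hm]
  · intro a ha
    rw [hprod] at ha
    exact expM_relations hm (congrFun (prm_independent ha))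

/-! ### Uniqueness and irreducibility -/

lemma sys_sub_smul {t : Fin 9 → K} {m : ℕ} {F F' : MvPolynomial (Fin 3) K} (h : Sys t m F)
    (h' : Sys t m F') (c : K) : Sys t m (F' - c • F) := by
  refine ⟨h'.1.sub ?_, fun i l hl => ?_⟩
  · rw [smul_eq_C_mul]
    simpa using (isHomogeneous_C (Fin 3) c).mul h.1
  · have : pderivs l (F' - c • F) = pderivs l F' - c • pderivs l F := by
      clear hl
      induction l with
      | nil => rfl
      | cons i l ih =>
        change pderiv i (pderivs l _) = pderiv i (pderivs l F') - c • pderiv i (pderivs l F)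
        rw [ih]
        simp
    rw [this, map_sub, smul_eval, h.2 i l hl, h'.2 i l hl, mul_zero, sub_zero]

lemma eq_paramMultiset {t : Fin 9 → K} (ht : Function.Injective t) {e : Fin 9 → ℕ}
    {u : Multiset K} (hu : u ≤ paramMultiset t e) :
    ∃ a : Fin 9 → ℕ, (∀ i, a i ≤ e i) ∧ u = paramMultiset t a := by
  classical
  refine ⟨fun i => u.count (t i), fun i => ?_, ?_⟩
  · rw [← count_paramMultiset ht e i]
    exact Multiset.count_le_of_le (t i) hu
  · ext x
    by_cases hx : ∃ i, x = t i
    · obtain ⟨i, rfl⟩ := hx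
      exact (count_paramMultiset ht (fun i => u.count (t i)) i).symm
    · rw [Multiset.count_eq_zero_of_notMem fun h => hx
          (mem_paramMultiset (Multiset.mem_of_le hu h)),
        Multiset.count_eq_zero_of_notMem fun h => hx (mem_paramMultiset h)]

lemma isUnit_of_homog_zero {A : MvPolynomial (Fin 3) K} (hA : A ≠ 0) (h : A.IsHomogeneous 0) :
    IsUnit A := by
  rw [← totalDegree_zero_iff_isHomogeneous, totalDegree_eq_zero_iff_eq_C] at h
  rw [h] at hA ⊢
  exact (isUnit_iff_ne_zero.mpr fun h0 => hA (by rw [h0, C_0])).map C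

/-- Parameters with exactly one relation, the prescribed one: the system consists of the
multiples of one irreducible form. -/
lemma exists_irreducible [CharZero K] [IsAlgClosed K] {t : Fin 9 → K}
    (ht : Function.Injective t) (ht0 : ∀ i, t i ≠ 0) {m : ℕ} (hm : 1 ≤ m)
    (hprod : ∏ i, t i ^ mlt m i = 1)
    (hrel : ∀ a : Fin 9 → ℕ, ∏ i, t i ^ a i = 1 → ∃ k, ∀ i, a i = k * mlt m i) :
    ∃ F : MvPolynomial (Fin 3) K, Irreducible F ∧ Sys t m F ∧
      ∀ F', Sys t m F' → ∃ c : K, F' = c • F := by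
  obtain ⟨F, hF0, hF⟩ := exists_sys ht ht0 hm hprod
  have hpull : ∀ G, Sys t m G → pull G = 0 → G = 0 := by
    intro G hG h0
    obtain ⟨n, rfl⟩ : ∃ n, m = n + 1 := ⟨m - 1, by omega⟩
    obtain ⟨H, rfl, hH⟩ := sys_of_pull_eq_zero ht0 hG h0
    rw [sys_eq_zero ht ht0 (N := n) ?_ le_rfl hH, mul_zero]
    intro k hk hkn he
    obtain ⟨q, hq⟩ := hrel _ he
    have h0 := hq 0
    simp only [mlt, if_true] at h0
    rcases q with _ | q
    · omega
    · nlinarith [Nat.zero_le (q * (n + 1 + 1))]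
  have hpF : pull F ≠ 0 := fun h => hF0 (hpull F hF h)
  obtain ⟨hr, hd⟩ := roots_of_sys ht hm hF hpF
  refine ⟨F, ⟨?_, ?_⟩, hF, ?_⟩
  · intro hu
    have := (isUnit_iff_totalDegree_of_isReduced.mp hu).2
    rw [hF.1.totalDegree hF0] at this
    omega
  · rintro A B rfl
    have hA : A ≠ 0 := left_ne_zero_of_mul hF0
    have hB : B ≠ 0 := right_ne_zero_of_mul hF0
    obtain ⟨a, b, hab, hAh, hBh⟩ := homog_of_mul hA hB hF.1
    rw [map_mul] at hpF hr hd
    have hpA := left_ne_zero_of_mul hpF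
    have hpB := right_ne_zero_of_mul hpF
    rw [Polynomial.natDegree_mul hpA hpB] at hd
    have hdA : (pull A).natDegree = 3 * a := by
      have := (pull_homog hAh).1
      have := (pull_homog hBh).1
      omega
    have hle : (pull A).roots ≤ paramMultiset t (mlt m) := by
      rw [← hr, Polynomial.roots_mul hpF]
      exact Multiset.le_add_right _ _
    obtain ⟨e, he, hrA⟩ := eq_paramMultiset ht hle
    have hpr := roots_prod hAh hpA hdA
    rw [hrA, prod_paramMultiset] at hpr
    obtain ⟨k, hk⟩ := hrel e hpr
    have hcard := IsAlgClosed.card_roots_eq_natDegree (p := pull A)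
    rw [hrA, hdA, card_paramMultiset, Finset.sum_congr rfl fun i _ => hk i, ← Finset.mul_sum,
      sum_mlt hm] at hcard
    have hk1 : k ≤ 1 := by
      have h0 := he 0
      rw [hk 0] at h0
      simp only [mlt, if_true] at h0
      by_contra hk2
      nlinarith
    interval_cases k
    · left
      obtain rfl : a = 0 := by omega
      exact isUnit_of_homog_zero hA hAh
    · right
      obtain rfl : b = 0 := by omega
      exact isUnit_of_homog_zero hB hBh
  · intro F' hF'
    by_cases hpF' : pull F' = 0
    · exact ⟨0, by rw [hpull F' hF' hpF', zero_smul]⟩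
    obtain ⟨hr', -⟩ := roots_of_sys ht hm hF' hpF'
    refine ⟨(pull F').leadingCoeff / (pull F).leadingCoeff, ?_⟩
    have hl := Polynomial.leadingCoeff_ne_zero.mpr hpF
    rw [← sub_eq_zero]
    apply hpull _ (sys_sub_smul hF hF' _)
    rw [map_sub, map_smul, sub_eq_zero, (IsAlgClosed.splits (pull F')).eq_prod_roots,
      (IsAlgClosed.splits (pull F)).eq_prod_roots, hr, hr', Polynomial.smul_eq_C_mul, ← mul_assoc,
      ← Polynomial.C_mul]
    simp only [Polynomial.leadingCoeff_mul, Polynomial.leadingCoeff_C]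
    simp [Polynomial.leadingCoeff_multiset_prod, hpF]

/-- The point of the nodal cubic with parameter `a`. -/
noncomputable def pt {a : K} (ha : a ≠ 0) : P2 K :=
  Projectivization.mk K (phi a) fun h => ha (by simpa [phi] using congrFun h 0)

lemma mult_pt {a : K} (ha : a ≠ 0) {F : MvPolynomial (Fin 3) K} {d : ℕ}
    (hF : F.IsHomogeneous d) (n : ℕ) : MultAtLeast F (pt ha) n ↔ MultAtLeastVec F (phi a) n := by
  obtain ⟨c, hc⟩ := Projectivization.exists_smul_eq_mk_rep K (phi a)
    fun h => ha (by simpa [phi] using congrFun h 0)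
  rw [MultAtLeast, pt, ← hc]
  exact mult_smul hF c.ne_zero _ _

lemma pt_injective {a b : K} (ha : a ≠ 0) (hb : b ≠ 0) (h : pt ha = pt hb) : a = b := by
  obtain ⟨c, hc⟩ := (Projectivization.mk_eq_mk_iff K _ _ _ _).mp h
  have h0 := congrFun hc 0
  have h1 := congrFun hc 1
  simp only [phi, Pi.smul_apply, Units.smul_def, smul_eq_mul, Matrix.cons_val_zero,
    Matrix.cons_val_one] at h0 h1
  rw [pow_two, ← mul_assoc, h0, pow_two] at h1
  exact (mul_left_cancel₀ ha h1).symm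

lemma sys_iff {t : Fin 9 → K} (ht0 : ∀ i, t i ≠ 0) {m : ℕ} {F : MvPolynomial (Fin 3) K} :
    Sys t m F ↔ F.IsHomogeneous (3 * m) ∧ MultAtLeast F (pt (ht0 0)) (m + 1) ∧
      (∀ i : Fin 9, i ≠ 0 → i ≠ 8 → MultAtLeast F (pt (ht0 i)) m) ∧
      MultAtLeast F (pt (ht0 8)) (m - 1) := by
  refine and_congr_right fun hF => ?_
  rw [← mlt_conditions (P := fun i n => MultAtLeast F (pt (ht0 i)) n)]
  exact forall_congr' fun i => (mult_pt _ hF _).symm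

end SpecialSystem

/-- For fixed `m ≥ 1` consider, for a `9`-tuple of points, the condition (*):
there is a nonzero homogeneous `F` of degree `3m` with `mult_{p_1} F ≥ m + 1`,
`mult_{p_i} F ≥ m` for `i = 2, …, 8` and `mult_{p_9} F ≥ m - 1`.  Then (a) for a
generic `9`-tuple the condition (*) fails, and (b) there is a `9`-tuple of
pairwise distinct points satisfying (*), for which the polynomial `F` can be
chosen irreducible and is unique up to a scalar factor. -/
theorem special_linear_system (K : Type) [Field K] [IsAlgClosed K] [CharZero K]
    (m : ℕ) (hm : 1 ≤ m) :
    (GenericTuple K 9 (fun p => ¬ ∃ F : MvPolynomial (Fin 3) K,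
      F ≠ 0 ∧ F.IsHomogeneous (3 * m) ∧
      MultAtLeast F (p 0) (m + 1) ∧
      (∀ i : Fin 9, i ≠ 0 → i ≠ 8 → MultAtLeast F (p i) m) ∧
      MultAtLeast F (p 8) (m - 1)))
    ∧
    (∃ p : Fin 9 → P2 K, Function.Injective p ∧
      ∃ F : MvPolynomial (Fin 3) K, Irreducible F ∧ F.IsHomogeneous (3 * m) ∧
        MultAtLeast F (p 0) (m + 1) ∧
        (∀ i : Fin 9, i ≠ 0 → i ≠ 8 → MultAtLeast F (p i) m) ∧
        MultAtLeast F (p 8) (m - 1) ∧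
        ∀ F' : MvPolynomial (Fin 3) K, F' ≠ 0 → F'.IsHomogeneous (3 * m) →
          MultAtLeast F' (p 0) (m + 1) →
          (∀ i : Fin 9, i ≠ 0 → i ≠ 8 → MultAtLeast F' (p i) m) →
          MultAtLeast F' (p 8) (m - 1) →
          ∃ c : K, F' = c • F) := by
  refine ⟨?_, ?_⟩
  · obtain ⟨G, n, hG, hn, h⟩ := SpecialSystem.generic_part (K := K) (m := m)
    refine ⟨G, n, hG, hn, fun p hp hpG => ?_⟩
    rintro ⟨F, hF0, hF, hmult⟩
    exact hF0 (h p hp hpG F hF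
      ((SpecialSystem.mlt_conditions (P := fun i n => MultAtLeast F (p i) n)).mpr hmult))
  · obtain ⟨t, ht, ht0, hprod, hrel⟩ := SpecialSystem.exists_params K hm
    obtain ⟨F, hirr, hF, huniq⟩ := SpecialSystem.exists_irreducible ht ht0 hm hprod hrel
    obtain ⟨hFh, h0, h1, h8⟩ := (SpecialSystem.sys_iff ht0).mp hF
    exact ⟨fun i => SpecialSystem.pt (ht0 i),
      fun i j hij => ht (SpecialSystem.pt_injective (ht0 i) (ht0 j) hij),
      F, hirr, hFh, h0, h1, h8,
      fun F' _ hF' h0' h1' h8' => huniq F' ((SpecialSystem.sys_iff ht0).mpr ⟨hF', h0', h1', h8'⟩)⟩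
end

section
/- Let r ≥ 1, let h ≥ 1 be an integer and h_1, …, h_r non-negative integers. Then for generic (p_1,…,p_r) ∈ (ℙ²(K))^r the following holds: if there exists an irreducible homogeneous polynomial F ∈ K[X,Y,Z] of degree h with mult_{p_i}(F) ≥ h_i for all i = 1,…,r, then Σ_{i=1}^r h_i² ≤ h² + h. -/
namespace CurveBound

open MvPolynomial

variable {K : Type} [Field K]

/-! ### Multiplicities -/

lemma mult_succ {F : MvPolynomial (Fin 3) K} {v : Fin 3 → K} {k : ℕ} :
    MultAtLeastVec F v (k + 1) ↔ eval v F = 0 ∧ ∀ i, MultAtLeastVec (pderiv i F) v k := by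
  constructor
  · refine fun H => ⟨H [] (by simp), fun i l hl => ?_⟩
    simpa [pderivs] using H (l ++ [i]) (by simpa using hl)
  · rintro ⟨h0, h1⟩ l hl
    rcases List.eq_nil_or_concat l with rfl | ⟨l', i, rfl⟩
    · exact h0
    · simpa [pderivs] using h1 i l' (by simpa using hl)

lemma mult_mono {F : MvPolynomial (Fin 3) K} {v : Fin 3 → K} {k l : ℕ}
    (H : MultAtLeastVec F v k) (hl : l ≤ k) : MultAtLeastVec F v l :=
  fun s hs => H s (hs.trans_le hl)

lemma pderivs_add (l : List (Fin 3)) (F G : MvPolynomial (Fin 3) K) :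
    pderivs l (F + G) = pderivs l F + pderivs l G := by
  induction l with
  | nil => rfl
  | cons i l ih => simp only [pderivs, List.foldr_cons] at ih ⊢; rw [ih, map_add]

lemma pderivs_C_mul (l : List (Fin 3)) (c : K) (F : MvPolynomial (Fin 3) K) :
    pderivs l (C c * F) = C c * pderivs l F := by
  induction l with
  | nil => rfl
  | cons i l ih =>
    simp only [pderivs, List.foldr_cons] at ih ⊢; rw [ih, pderiv_C_mul]

lemma pderivs_sum {ι : Type*} (l : List (Fin 3)) (s : Finset ι)
    (F : ι → MvPolynomial (Fin 3) K) :
    pderivs l (∑ i ∈ s, F i) = ∑ i ∈ s, pderivs l (F i) := by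
  induction l with
  | nil => rfl
  | cons i l ih =>
    simp only [pderivs, List.foldr_cons] at ih ⊢; rw [ih, map_sum]

lemma mult_add {F G : MvPolynomial (Fin 3) K} {v : Fin 3 → K} {k : ℕ}
    (hF : MultAtLeastVec F v k) (hG : MultAtLeastVec G v k) : MultAtLeastVec (F + G) v k :=
  fun l hl => by rw [pderivs_add, map_add, hF l hl, hG l hl, add_zero]

lemma mult_mul_right {v : Fin 3 → K} {k : ℕ} : ∀ {F : MvPolynomial (Fin 3) K}
    (_ : MultAtLeastVec F v k) (Q : MvPolynomial (Fin 3) K), MultAtLeastVec (F * Q) v k := by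
  induction k with
  | zero => intro F _ Q l hl; simp at hl
  | succ k ih =>
    intro F hF Q
    have hF' := mult_succ.1 hF
    refine mult_succ.2 ⟨by simp [hF'.1], fun i => ?_⟩
    rw [Derivation.leibniz, smul_eq_mul, smul_eq_mul, mul_comm Q]
    exact mult_add (ih (mult_mono hF k.le_succ) _) (ih (hF'.2 i) _)

lemma isHomogeneous_pderivs (l : List (Fin 3)) {F : MvPolynomial (Fin 3) K} {n : ℕ}
    (hF : F.IsHomogeneous n) : (pderivs l F).IsHomogeneous (n - l.length) := by
  induction l with
  | nil => simpa [pderivs] using hF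
  | cons i l ih => simpa [pderivs, Nat.sub_sub] using ih.pderiv (i := i)

lemma eval_smul_of_isHomogeneous {F : MvPolynomial (Fin 3) K} {n : ℕ} (hF : F.IsHomogeneous n)
    (c : K) (v : Fin 3 → K) : eval (c • v) F = c ^ n * eval v F := by
  rw [eval_eq, eval_eq, Finset.mul_sum]
  refine Finset.sum_congr rfl fun s hs => ?_
  have hd := hF.degree_eq_sum_deg_support hs
  have : c ^ n = ∏ i ∈ s.support, c ^ s i := by
    rw [Finset.prod_pow_eq_pow_sum, ← hd]
  simp only [Pi.smul_apply, smul_eq_mul, mul_pow, Finset.prod_mul_distrib, this]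
  ring

/-- The multiplicity of a homogeneous polynomial does not depend on the representative. -/
lemma mult_smul {F : MvPolynomial (Fin 3) K} {n : ℕ} (hF : F.IsHomogeneous n)
    {v : Fin 3 → K} {k : ℕ} (H : MultAtLeastVec F v k) (c : K) : MultAtLeastVec F (c • v) k :=
  fun l hl => by
    rw [eval_smul_of_isHomogeneous (isHomogeneous_pderivs l hF), H l hl, mul_zero]

/-- A form of degree `n` with a point of multiplicity `n + 1` vanishes (by Euler's identity). -/
lemma eq_zero_of_mult [CharZero K] {v : Fin 3 → K} {n : ℕ} :
    ∀ {F : MvPolynomial (Fin 3) K}, F.IsHomogeneous n → MultAtLeastVec F v (n + 1) → F = 0 := by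
  induction n with
  | zero =>
    intro F hF H
    rw [← totalDegree_zero_iff_isHomogeneous, totalDegree_eq_zero_iff_eq_C] at hF
    have h0 := (mult_succ.1 H).1
    rw [hF, eval_C] at h0
    rw [hF, h0, C_0]
  | succ n ih =>
    intro F hF H
    have h1 : ∀ i, pderiv i F = 0 := fun i => ih (hF.pderiv (i := i)) ((mult_succ.1 H).2 i)
    have := hF.sum_X_mul_pderiv
    simp only [h1, mul_zero, Finset.sum_const_zero] at this
    have h2 := this.symm
    rw [nsmul_eq_mul] at h2
    rcases mul_eq_zero.1 h2 with h3 | h3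
    · exact absurd h3 (by exact_mod_cast n.succ_ne_zero)
    · exact h3

/-! ### An affine chart -/

/-- The substitution `X ↦ x, Y ↦ y, Z ↦ 1 - t² x - t y`, which dehomogenizes polynomials with
respect to the linear form `t² X + t Y + Z`. -/
noncomputable def chart (t : K) : MvPolynomial (Fin 3) K →ₐ[K] MvPolynomial (Fin 2) K :=
  aeval ![X 0, X 1, 1 - C (t ^ 2) * X 0 - C t * X 1]

/-- Translation: `transl p f = f (x + p)`. -/
noncomputable def transl (p : Fin 2 → K) : MvPolynomial (Fin 2) K →ₐ[K] MvPolynomial (Fin 2) K :=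
  aeval fun i => X i + C (p i)

lemma transl_neg (p : Fin 2 → K) (f : MvPolynomial (Fin 2) K) :
    transl p (transl (-p) f) = f := by
  have : (transl p).comp (transl (-p)) = AlgHom.id K _ := by
    ext i; simp [transl, algebraMap_eq]
  exact DFunLike.congr_fun this f

/-- The ideal of polynomials vanishing to order `k` at the point `p` of the affine plane. -/
noncomputable def jetIdeal (p : Fin 2 → K) (k : ℕ) : Ideal (MvPolynomial (Fin 2) K) :=
  (idealOfVars (Fin 2) K ^ k).comap (transl p)

lemma mem_jetIdeal {p : Fin 2 → K} {k : ℕ} {f : MvPolynomial (Fin 2) K} :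
    f ∈ jetIdeal p k ↔ ∀ s : Fin 2 →₀ ℕ, s.degree < k → coeff s (transl p f) = 0 := by
  rw [jetIdeal, Ideal.mem_comap, mem_pow_idealOfVars_iff']

lemma mul_mem_jetIdeal {p : Fin 2 → K} {k l : ℕ} {f g : MvPolynomial (Fin 2) K}
    (hf : f ∈ jetIdeal p k) (hg : g ∈ jetIdeal p l) : f * g ∈ jetIdeal p (k + l) := by
  rw [jetIdeal, Ideal.mem_comap] at *
  rw [map_mul, pow_add]
  exact Ideal.mul_mem_mul hf hg

lemma X_sub_mem_jetIdeal (p : Fin 2 → K) (i : Fin 2) : X i - C (p i) ∈ jetIdeal p 1 := by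
  rw [jetIdeal, Ideal.mem_comap, pow_one]
  have : transl p (X i - C (p i)) = X i := by simp [transl, algebraMap_eq]
  rw [this]
  exact Ideal.subset_span ⟨i, rfl⟩

lemma isCoprime_jetIdeal {p q : Fin 2 → K} (hpq : p ≠ q) (k l : ℕ) :
    IsCoprime (jetIdeal p k) (jetIdeal q l) := by
  obtain ⟨i, hi⟩ := Function.ne_iff.1 hpq
  have h1 : IsCoprime (jetIdeal p 1) (jetIdeal q 1) := by
    rw [Ideal.isCoprime_iff_exists]
    refine ⟨C ((q i - p i)⁻¹) * (X i - C (p i)), Ideal.mul_mem_left _ _ (X_sub_mem_jetIdeal p i),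
      - (C ((q i - p i)⁻¹) * (X i - C (q i))),
      neg_mem (Ideal.mul_mem_left _ _ (X_sub_mem_jetIdeal q i)), ?_⟩
    have : C ((q i - p i)⁻¹) * (X i - C (p i)) + - (C ((q i - p i)⁻¹) * (X i - C (q i))) =
        (C ((q i - p i)⁻¹ * (q i - p i)) : MvPolynomial (Fin 2) K) := by
      rw [C_mul, C_sub]; ring
    rw [this, inv_mul_cancel₀ (sub_ne_zero.2 (Ne.symm hi)), C_1]
  have hle : ∀ (p : Fin 2 → K) k, jetIdeal p 1 ^ k ≤ jetIdeal p k := by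
    intro p k
    have := Ideal.le_comap_pow (K := idealOfVars (Fin 2) K) (transl p) k
    simpa [jetIdeal] using this
  have h2 : IsCoprime (jetIdeal p 1 ^ k) (jetIdeal q 1 ^ l) := h1.pow
  rw [Ideal.isCoprime_iff_sup_eq] at h2 ⊢
  exact top_le_iff.1 (h2 ▸ sup_le_sup (hle p k) (hle q l))

/-- The affine point `(w₀, w₁)` underlying a point `w` of the plane `t² w₀ + t w₁ + w₂ = 1`. -/
noncomputable def affinePt (w : Fin 3 → K) : Fin 2 → K := ![w 0, w 1]

lemma pderiv_algHom {m n : ℕ} (Φ : MvPolynomial (Fin m) K →ₐ[K] MvPolynomial (Fin n) K)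
    (i : Fin n) (F : MvPolynomial (Fin m) K) :
    pderiv i (Φ F) = ∑ j, Φ (pderiv j F) * pderiv i (Φ (X j)) := by
  induction F using MvPolynomial.induction_on with
  | C a => simp only [algHom_C, algebraMap_eq, pderiv_C, map_zero, zero_mul, Finset.sum_const_zero]
  | add f g hf hg => simp only [map_add, hf, hg, add_mul, Finset.sum_add_distrib]
  | mul_X f k hf =>
    have h1 : ∀ j, Φ (pderiv j (f * X k)) * pderiv i (Φ (X j)) =
        Φ f * (if k = j then pderiv i (Φ (X j)) else 0) +
          Φ (X k) * (Φ (pderiv j f) * pderiv i (Φ (X j))) := by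
      intro j
      rw [Derivation.leibniz, pderiv_X, map_add, smul_eq_mul, smul_eq_mul, map_mul, map_mul]
      rcases eq_or_ne k j with rfl | hkj
      · simp only [Pi.single_eq_same, map_one, if_true]; ring
      · rw [Pi.single_eq_of_ne hkj, map_zero, if_neg hkj]; ring
    rw [Finset.sum_congr rfl fun j _ => h1 j, Finset.sum_add_distrib, ← Finset.mul_sum,
      ← Finset.mul_sum, ← hf, Finset.sum_ite_eq, if_pos (Finset.mem_univ k), map_mul,
      Derivation.leibniz, smul_eq_mul, smul_eq_mul]

/-- Dehomogenizing preserves multiplicities. -/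
lemma chart_mem_jetIdeal [CharZero K] {t : K} {w : Fin 3 → K}
    (hw : t ^ 2 * w 0 + t * w 1 + w 2 = 1) {k : ℕ} :
    ∀ {F : MvPolynomial (Fin 3) K}, MultAtLeastVec F w k →
      chart t F ∈ jetIdeal (affinePt w) k := by
  induction k with
  | zero => intro F _; simp [jetIdeal]
  | succ k ih =>
    intro F hF
    obtain ⟨h0, h1⟩ := mult_succ.1 hF
    rw [mem_jetIdeal]
    intro s hs
    rcases eq_or_ne s 0 with rfl | hs0
    · rw [← constantCoeff_eq, ← h0]
      have : ((constantCoeff (R := K) (σ := Fin 2)).comp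
          ((transl (affinePt w)).comp (chart t)).toRingHom) = eval w := by
        refine MvPolynomial.ringHom_ext (fun a => ?_) (fun i => ?_)
        · simp [chart, transl, algebraMap_eq]
        · fin_cases i
          · simp [chart, transl, affinePt]
          · simp [chart, transl, affinePt]
          · simp [chart, transl, algebraMap_eq, affinePt]
            linear_combination -hw
      exact DFunLike.congr_fun this F
    · obtain ⟨i, hi⟩ := Finsupp.ne_iff.1 hs0
      have hi' : s i ≠ 0 := hi
      have hle : Finsupp.single i 1 ≤ s := by
        rw [Finsupp.single_le_iff]; omega
      obtain ⟨u, rfl⟩ := exists_add_of_le hle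
      have hu : u.degree < k := by
        have : (Finsupp.single i 1 + u).degree = 1 + u.degree := by simp
        omega
      have hmem : pderiv i (transl (affinePt w) (chart t F)) ∈ idealOfVars (Fin 2) K ^ k := by
        rw [← AlgHom.comp_apply, pderiv_algHom]
        exact Ideal.sum_mem _ fun j _ => Ideal.mul_mem_right _ _ (ih (h1 j))
      have hc := (mem_pow_idealOfVars_iff' _ _).1 hmem u hu
      rw [coeff_pderiv] at hc
      rw [add_comm]
      rcases mul_eq_zero.1 hc with h | h
      · exact h
      · exact absurd h (by exact_mod_cast (u i).succ_ne_zero)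

/-! ### Jets at several points -/

open scoped Classical in
/-- The exponents of the monomials in two variables of degree less than `k`. -/
noncomputable def jetIdx (k : ℕ) : Finset (Fin 2 →₀ ℕ) :=
  (Finset.range k).biUnion fun j => Finset.finsuppAntidiag Finset.univ j

lemma mem_jetIdx {k : ℕ} {s : Fin 2 →₀ ℕ} : s ∈ jetIdx k ↔ s.degree < k := by
  simp [jetIdx, Finset.mem_finsuppAntidiag, Finsupp.degree_eq_sum]

lemma card_jetIdx (k : ℕ) : 2 * (jetIdx k).card = k * (k + 1) := by
  classical
  have h : (jetIdx k).card = ∑ j ∈ Finset.range k, (j + 1) := by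
    rw [jetIdx, Finset.card_biUnion]
    · refine Finset.sum_congr rfl fun j _ => ?_
      rw [Finset.card_finsuppAntidiag_nat_eq_choose]
      simp [add_comm 1 j]
    · intro i _ j _ hij
      rw [Function.onFun, Finset.disjoint_left]
      intro s hs hs'
      rw [Finset.mem_finsuppAntidiag] at hs hs'
      exact hij (hs.1.symm.trans hs'.1)
  rw [h]
  clear h
  induction k with
  | zero => simp
  | succ k ih => rw [Finset.sum_range_succ, mul_add, ih]; ring

/-- The Taylor coefficients of order less than `k` at the point `p`. -/
noncomputable def jetMap (p : Fin 2 → K) (k : ℕ) :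
    MvPolynomial (Fin 2) K →ₗ[K] (jetIdx k → K) :=
  LinearMap.pi fun s => (lcoeff K s.1).comp (transl p).toLinearMap

lemma jetMap_eq_zero {p : Fin 2 → K} {k : ℕ} {f : MvPolynomial (Fin 2) K} :
    jetMap p k f = 0 ↔ f ∈ jetIdeal p k := by
  rw [mem_jetIdeal, funext_iff]
  constructor
  · intro H s hs
    exact H ⟨s, mem_jetIdx.2 hs⟩
  · rintro H ⟨s, hs⟩
    exact H s (mem_jetIdx.1 hs)

lemma jetMap_surjective (p : Fin 2 → K) (k : ℕ) : Function.Surjective (jetMap p k) := by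
  classical
  intro y
  refine ⟨transl (-p) (∑ s : jetIdx k, monomial s.1 (y s)), ?_⟩
  ext s
  change coeff s.1 (transl p (transl (-p) _)) = y s
  rw [transl_neg, coeff_sum, Finset.sum_eq_single s]
  · simp
  · intro b _ hb
    rw [coeff_monomial, if_neg fun h => hb (Subtype.ext h)]
  · simp

/-- The jets of order less than `k i` at the points `p i`. -/
noncomputable def jetsMap {r : ℕ} (p : Fin r → Fin 2 → K) (k : Fin r → ℕ) :
    MvPolynomial (Fin 2) K →ₗ[K] ((i : Fin r) → jetIdx (k i) → K) :=
  LinearMap.pi fun i => jetMap (p i) (k i)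

lemma jetsMap_eq_zero {r : ℕ} {p : Fin r → Fin 2 → K} {k : Fin r → ℕ}
    {f : MvPolynomial (Fin 2) K} : jetsMap p k f = 0 ↔ ∀ i, f ∈ jetIdeal (p i) (k i) := by
  rw [funext_iff]
  exact forall_congr' fun i => jetMap_eq_zero

/-- Jets at distinct points may be prescribed independently (Chinese remainder theorem). -/
lemma jetsMap_surjective {r : ℕ} {p : Fin r → Fin 2 → K} (hp : Function.Injective p)
    (k : Fin r → ℕ) : Function.Surjective (jetsMap p k) := by
  intro y
  choose f hf using fun i => jetMap_surjective (p i) (k i) (y i)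
  have hc : Pairwise (Function.onFun IsCoprime fun i => jetIdeal (p i) (k i)) :=
    fun i j hij => isCoprime_jetIdeal (hp.ne hij) _ _
  obtain ⟨a, ha⟩ := Ideal.pi_quotient_surjective hc fun i => Ideal.Quotient.mk _ (f i)
  refine ⟨a, funext fun i => ?_⟩
  have h1 : a - f i ∈ jetIdeal (p i) (k i) := Ideal.Quotient.eq.1 (ha i)
  rw [← jetMap_eq_zero, map_sub, sub_eq_zero] at h1
  exact h1.trans (hf i)

lemma finrank_jets {r : ℕ} (k : Fin r → ℕ) :
    2 * Module.finrank K ((i : Fin r) → jetIdx (k i) → K) = ∑ i, k i * (k i + 1) := by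
  rw [Module.finrank_pi_fintype, Finset.mul_sum]
  refine Finset.sum_congr rfl fun i _ => ?_
  rw [Module.finrank_fintype_fun_eq_card, Fintype.card_coe, card_jetIdx]

/-! ### Spaces of forms -/

/-- Forms of degree `n` in three variables. -/
local notation "𝓗" => homogeneousSubmodule (Fin 3) K

instance finite_forms (n : ℕ) : Module.Finite K (𝓗 n) :=
  Module.Finite.of_fg (homogeneousSubmodule_fg (Fin 3) K n)

lemma finrank_forms (n : ℕ) : 2 * Module.finrank K (𝓗 n) = (n + 2) * (n + 1) := by
  classical
  have hs : {d : Fin 3 →₀ ℕ | d.degree = n} =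
      ((Finset.finsuppAntidiag (Finset.univ : Finset (Fin 3)) n : Finset (Fin 3 →₀ ℕ)) :
        Set (Fin 3 →₀ ℕ)) := by
    ext d
    simp [Finset.mem_finsuppAntidiag, Finsupp.degree_eq_sum]
  have e : 𝓗 n = restrictSupport K
      ((Finset.finsuppAntidiag (Finset.univ : Finset (Fin 3)) n : Finset (Fin 3 →₀ ℕ)) :
        Set (Fin 3 →₀ ℕ)) := by
    rw [homogeneousSubmodule_eq_finsupp_supported, hs]; rfl
  rw [e, Module.finrank_eq_card_basis (basisRestrictSupport K _)]
  rw [← Set.toFinset_card, Finset.toFinset_coe, Finset.card_finsuppAntidiag_nat_eq_choose]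
  have : (Finset.univ : Finset (Fin 3)).card + n - 1 = n + 2 := by simp; omega
  rw [this, ← Nat.choose_symm (by omega), Nat.add_sub_cancel_left, Nat.choose_two_right,
    Nat.add_sub_assoc (by omega), mul_comm 2]
  exact Nat.div_mul_cancel (Nat.even_mul_pred_self (n + 2)).two_dvd

/-- Every polynomial of degree at most `d` is the dehomogenization of a form of degree `d`. -/
lemma exists_form_chart (t : K) {d : ℕ} {a : MvPolynomial (Fin 2) K} (ha : a.totalDegree ≤ d) :
    ∃ G ∈ 𝓗 d, chart t G = a := by
  -- the linear form dehomogenizing to `1`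
  let l : MvPolynomial (Fin 3) K := C (t ^ 2) * X 0 + C t * X 1 + X 2
  have hl : l.IsHomogeneous 1 :=
    ((isHomogeneous_C_mul_X _ _).add (isHomogeneous_C_mul_X _ _)).add (isHomogeneous_X _ _)
  have hl1 : chart t l = 1 := by
    simp [l, chart, algebraMap_eq]
  refine ⟨∑ s ∈ a.support, C (coeff s a) * (X 0 ^ s 0 * X 1 ^ s 1 * l ^ (d - (s 0 + s 1))),
    ?_, ?_⟩
  · refine IsHomogeneous.sum _ _ _ fun s hs => IsHomogeneous.C_mul ?_ _
    have h1 : s 0 + s 1 ≤ d := by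
      have := le_totalDegree hs
      rw [Finsupp.sum_fintype _ _ (fun _ => rfl), Fin.sum_univ_two] at this
      omega
    have := ((isHomogeneous_X_pow (R := K) (0 : Fin 3) (s 0)).mul
      (isHomogeneous_X_pow (1 : Fin 3) (s 1))).mul (hl.pow (d - (s 0 + s 1)))
    rwa [one_mul, Nat.add_sub_cancel' h1] at this
  · conv_rhs => rw [as_sum a]
    rw [map_sum]
    refine Finset.sum_congr rfl fun s _ => ?_
    rw [map_mul, map_mul, map_mul, map_pow, map_pow, map_pow, hl1, one_pow, mul_one,
      monomial_eq, Finsupp.prod_fintype _ _ (fun _ => pow_zero _), Fin.prod_univ_two]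
    simp [chart, algebraMap_eq]

/-- A surjection from the affine coordinate ring onto a finite-dimensional space remains
surjective on the dehomogenizations of forms of suitable large degree. -/
lemma exists_degree_surjective (t : K) (c : ℕ) {T : Type*} [AddCommGroup T] [Module K T]
    [Module.Finite K T] {θ : MvPolynomial (Fin 2) K →ₗ[K] T} (hθ : Function.Surjective θ) :
    ∃ d, ∀ y : T, ∃ G ∈ 𝓗 (d + c), θ (chart t G) = y := by
  let b := Module.finBasis K T
  choose a ha using fun i => hθ (b i)
  refine ⟨Finset.univ.sup fun i => (a i).totalDegree, fun y => ?_⟩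
  have hdeg : (∑ i, b.repr y i • a i).totalDegree ≤
      (Finset.univ.sup fun i => (a i).totalDegree) + c := by
    refine (totalDegree_finsetSum _ _).trans (le_add_right (Finset.sup_mono_fun fun i _ => ?_))
    exact totalDegree_smul_le _ _
  obtain ⟨G, hG, hGa⟩ := exists_form_chart t hdeg
  refine ⟨G, hG, ?_⟩
  rw [hGa, map_sum]
  simp only [map_smul, ha]
  exact b.sum_repr y

/-- Multiplication by a form `F` of degree `h`, on forms of degree `n`. -/
noncomputable def mulForm {h : ℕ} {F : MvPolynomial (Fin 3) K} (hF : F.IsHomogeneous h)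
    (n m : ℕ) (hm : h + n = m) : 𝓗 n →ₗ[K] 𝓗 m :=
  (LinearMap.mulLeft K F).restrict fun x hx => by
    have h1 : (F * x).IsHomogeneous (h + n) := hF.mul hx
    rw [hm] at h1
    exact h1

/-- Exactness of the Koszul complex: if `F` is irreducible and does not divide `E`, the space of
forms `a` and `b` of degree `d + h` with `F a + E b = 0` has dimension at most that of the space
of forms of degree `d`. -/
lemma finrank_koszul_ker {h : ℕ} {F E : MvPolynomial (Fin 3) K} (hF : F.IsHomogeneous h)
    (hE : E.IsHomogeneous h) (hirr : Irreducible F) (hnd : ¬ F ∣ E) (d m : ℕ)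
    (hm : h + (h + d) = m) :
    Module.finrank K (LinearMap.ker
      ((mulForm hF (h + d) m hm).coprod (mulForm hE (h + d) m hm))) ≤
      Module.finrank K (𝓗 d) := by
  let κ : 𝓗 d →ₗ[K] 𝓗 (h + d) × 𝓗 (h + d) :=
    (-(mulForm hE d (h + d) rfl)).prod (mulForm hF d (h + d) rfl)
  refine le_trans (Submodule.finrank_mono ?_) (LinearMap.finrank_range_le κ)
  rintro ⟨a, b⟩ hab
  have hab' : F * a.1 + E * b.1 = 0 := congrArg Subtype.val (LinearMap.mem_ker.1 hab)
  have hp : Prime F := UniqueFactorizationMonoid.irreducible_iff_prime.1 hirr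
  have hdvd : F ∣ E * b.1 := ⟨-a.1, by linear_combination hab'⟩
  obtain ⟨c, hc⟩ := (hp.dvd_or_dvd hdvd).resolve_left hnd
  -- the cofactor `c` may be replaced by its component of degree `d`
  have hc' : b.1 = F * homogeneousComponent d c := by
    have hb : homogeneousComponent (h + d) b.1 = b.1 := by
      rw [homogeneousComponent_of_mem b.2, if_pos rfl]
    rw [← hb, hc]
    conv_lhs => rw [← sum_homogeneousComponent c]
    rw [Finset.mul_sum, map_sum, Finset.sum_eq_single d]
    · rw [homogeneousComponent_of_mem (hF.mul (homogeneousComponent_isHomogeneous d c)),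
        if_pos rfl]
    · intro i _ hi
      rw [homogeneousComponent_of_mem (hF.mul (homogeneousComponent_isHomogeneous i c)),
        if_neg (by omega)]
    · intro hd
      rw [Finset.mem_range, not_lt] at hd
      rw [homogeneousComponent_eq_zero d c (by omega), mul_zero, map_zero]
  have ha : a.1 = -(E * homogeneousComponent d c) := by
    refine mul_left_cancel₀ hp.ne_zero ?_
    rw [hc'] at hab'
    linear_combination hab'
  exact ⟨⟨homogeneousComponent d c, homogeneousComponent_isHomogeneous d c⟩,
    Prod.ext (Subtype.ext ha.symm) (Subtype.ext hc'.symm)⟩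

/-- A dimension count. The composite `Λ ∘ P` factors through the range of `Ψ`, which bounds its rank
from above, and the cokernel of `P` bounds it from below as `Λ` is surjective. -/
lemma finrank_count {V W T U : Type*} [AddCommGroup V] [Module K V] [AddCommGroup W] [Module K W]
    [AddCommGroup T] [Module K T] [AddCommGroup U] [Module K U] [Module.Finite K V]
    [Module.Finite K W] [Module.Finite K U] (P : V →ₗ[K] W) (Λ : W →ₗ[K] T)
    (hΛ : Function.Surjective Λ) (Ψ : V →ₗ[K] U)
    (hΨ : LinearMap.ker Ψ ≤ LinearMap.ker (Λ.comp P)) :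
    Module.finrank K T + Module.finrank K V ≤
      Module.finrank K U + Module.finrank K (LinearMap.ker P) + Module.finrank K W := by
  have h1 := LinearMap.finrank_range_add_finrank_ker Λ
  rw [LinearMap.range_eq_top.2 hΛ, finrank_top] at h1
  have h2 := LinearMap.finrank_range_add_finrank_ker Ψ
  have h3 := Submodule.finrank_le (LinearMap.range Ψ)
  have h4 := Submodule.finrank_mono hΨ
  have h5 := LinearMap.finrank_range_add_finrank_ker (P.domRestrict (LinearMap.ker (Λ.comp P)))
  have h6 : LinearMap.range (P.domRestrict (LinearMap.ker (Λ.comp P))) ≤ LinearMap.ker Λ := by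
    rintro _ ⟨x, rfl⟩
    exact x.2
  have h7 := Submodule.finrank_mono h6
  have h8 : Module.finrank K (LinearMap.ker (P.domRestrict (LinearMap.ker (Λ.comp P)))) ≤
      Module.finrank K (LinearMap.ker P) := by
    let q := LinearMap.ker (Λ.comp P)
    let ι : LinearMap.ker (P.domRestrict q) →ₗ[K] LinearMap.ker P :=
      q.subtype.restrict fun x hx => hx
    refine LinearMap.finrank_le_finrank_of_injective (f := ι) ?_
    intro x y hxy
    exact Subtype.ext (Subtype.ext (congrArg (fun z : LinearMap.ker P => (z : V)) hxy))
  omega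

/-! ### A weak form of Bézout's theorem -/

/-- There is `t` such that the form `t² X + t Y + Z` vanishes at none of finitely many nonzero
vectors. -/
lemma exists_form_ne_zero [CharZero K] {r : ℕ} {v : Fin r → Fin 3 → K} (hv : ∀ i, v i ≠ 0) :
    ∃ t : K, ∀ i, t ^ 2 * v i 0 + t * v i 1 + v i 2 ≠ 0 := by
  let q : Fin r → Polynomial K := fun i =>
    Polynomial.C (v i 0) * Polynomial.X ^ 2 + Polynomial.C (v i 1) * Polynomial.X +
      Polynomial.C (v i 2)
  have hq : ∀ i, q i ≠ 0 := by
    intro i h0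
    refine hv i (funext fun j => ?_)
    have h2 : (q i).coeff 2 = 0 := by rw [h0, Polynomial.coeff_zero]
    have h1 : (q i).coeff 1 = 0 := by rw [h0, Polynomial.coeff_zero]
    have h00 : (q i).coeff 0 = 0 := by rw [h0, Polynomial.coeff_zero]
    simp [q, Polynomial.coeff_X, Polynomial.coeff_C, Polynomial.coeff_X_pow] at h2 h1 h00
    fin_cases j <;> assumption
  have hprod : ∏ i, q i ≠ 0 := Finset.prod_ne_zero_iff.2 fun i _ => hq i
  obtain ⟨t, ht⟩ : ∃ t, (∏ i, q i).eval t ≠ 0 := by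
    by_contra! H
    exact hprod (Polynomial.funext fun t => by rw [H t, Polynomial.eval_zero])
  refine ⟨t, fun i h0 => ht ?_⟩
  rw [Polynomial.eval_prod]
  refine Finset.prod_eq_zero (Finset.mem_univ i) ?_
  simp only [q, Polynomial.eval_add, Polynomial.eval_mul, Polynomial.eval_C, Polynomial.eval_pow,
    Polynomial.eval_X]
  linear_combination h0

/-- Bézout's inequality with multiplicities, for points normalized to lie in an affine chart.
It is obtained by counting dimensions: forms `F a + E b` of large degree have jets of order
`m i + n i` at the `i`-th point which depend only on the jets of order `n i` of `a` and of order
`m i` of `b`. -/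
lemma bezout_chart [CharZero K] {r h : ℕ} {F E : MvPolynomial (Fin 3) K}
    (hF : F.IsHomogeneous h) (hE : E.IsHomogeneous h) (hirr : Irreducible F) (hnd : ¬ F ∣ E)
    {t : K} {w : Fin r → Fin 3 → K} (hw : ∀ i, t ^ 2 * w i 0 + t * w i 1 + w i 2 = 1)
    (hinj : Function.Injective w) {m n : Fin r → ℕ}
    (hm : ∀ i, MultAtLeastVec F (w i) (m i)) (hn : ∀ i, MultAtLeastVec E (w i) (n i)) :
    ∑ i, m i * n i ≤ h ^ 2 := by
  let p : Fin r → Fin 2 → K := fun i => affinePt (w i)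
  have hp : Function.Injective p := by
    intro i j hij
    have h0 : w i 0 = w j 0 := congrFun hij 0
    have h1 : w i 1 = w j 1 := congrFun hij 1
    refine hinj (funext fun k => ?_)
    fin_cases k
    · exact h0
    · exact h1
    · have h2 := hw i
      have h3 := hw j
      rw [h0, h1] at h2
      exact add_left_cancel (h2.trans h3.symm)
  obtain ⟨d, hd⟩ := exists_degree_surjective t (2 * h)
    (jetsMap_surjective hp fun i => m i + n i)
  have hdeg : h + (h + d) = d + 2 * h := by ring
  let P := (mulForm hF (h + d) _ hdeg).coprod (mulForm hE (h + d) _ hdeg)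
  let Λ : 𝓗 (d + 2 * h) →ₗ[K] ((i : Fin r) → jetIdx (m i + n i) → K) :=
    (jetsMap p fun i => m i + n i).comp ((chart t).toLinearMap.comp (𝓗 (d + 2 * h)).subtype)
  have hΛ : Function.Surjective Λ := fun y => by
    obtain ⟨G, hG, hGy⟩ := hd y
    exact ⟨⟨G, hG⟩, hGy⟩
  let j := (chart t).toLinearMap.comp (𝓗 (h + d)).subtype
  let Ψ := ((jetsMap p n).comp j).prodMap ((jetsMap p m).comp j)
  have hΨ : LinearMap.ker Ψ ≤ LinearMap.ker (Λ.comp P) := by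
    rintro ⟨a, b⟩ hab
    have hab' := LinearMap.mem_ker.1 hab
    have ha : ∀ i, chart t a.1 ∈ jetIdeal (p i) (n i) :=
      jetsMap_eq_zero.1 (congrArg Prod.fst hab')
    have hb : ∀ i, chart t b.1 ∈ jetIdeal (p i) (m i) :=
      jetsMap_eq_zero.1 (congrArg Prod.snd hab')
    refine LinearMap.mem_ker.2 (jetsMap_eq_zero.2 fun i => ?_)
    change chart t (F * a.1 + E * b.1) ∈ _
    rw [map_add, map_mul, map_mul]
    refine add_mem (mul_mem_jetIdeal (chart_mem_jetIdeal (hw i) (hm i)) (ha i)) ?_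
    rw [add_comm (m i)]
    exact mul_mem_jetIdeal (chart_mem_jetIdeal (hw i) (hn i)) (hb i)
  have key := finrank_count P Λ hΛ Ψ hΨ
  have hker := finrank_koszul_ker hF hE hirr hnd d _ hdeg
  rw [Module.finrank_prod, Module.finrank_prod] at key
  have e1 := finrank_jets (K := K) fun i => m i + n i
  have e2 := finrank_jets (K := K) m
  have e3 := finrank_jets (K := K) n
  have e4 := finrank_forms (K := K) d
  have e5 := finrank_forms (K := K) (h + d)
  have e6 := finrank_forms (K := K) (d + 2 * h)
  have e7 : ∑ i, (m i + n i) * (m i + n i + 1) =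
      ∑ i, m i * (m i + 1) + ∑ i, n i * (n i + 1) + 2 * ∑ i, m i * n i := by
    rw [Finset.mul_sum, ← Finset.sum_add_distrib, ← Finset.sum_add_distrib]
    exact Finset.sum_congr rfl fun i _ => by ring
  change _ ≤ _ + Module.finrank K (LinearMap.ker P) + _ at key
  change Module.finrank K (LinearMap.ker P) ≤ _ at hker
  nlinarith

/-- Bézout's inequality with multiplicities at distinct points, for two forms of the same degree,
one of which is irreducible and does not divide the other. -/
lemma bezout [CharZero K] {r h : ℕ} {F E : MvPolynomial (Fin 3) K}
    (hF : F.IsHomogeneous h) (hE : E.IsHomogeneous h) (hirr : Irreducible F) (hnd : ¬ F ∣ E)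
    {p : Fin r → P2 K} (hp : Function.Injective p) {m n : Fin r → ℕ}
    (hm : ∀ i, MultAtLeast F (p i) (m i)) (hn : ∀ i, MultAtLeast E (p i) (n i)) :
    ∑ i, m i * n i ≤ h ^ 2 := by
  obtain ⟨t, ht⟩ := exists_form_ne_zero fun i => (p i).rep_nonzero
  let c : Fin r → K := fun i =>
    (t ^ 2 * (p i).rep 0 + t * (p i).rep 1 + (p i).rep 2)⁻¹
  have hc : ∀ i, c i ≠ 0 := fun i => inv_ne_zero (ht i)
  refine bezout_chart (t := t) (w := fun i => c i • (p i).rep) hF hE hirr hnd (fun i => ?_) ?_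
    (fun i => mult_smul hF (hm i) _) (fun i => mult_smul hE (hn i) _)
  · have : c i * (t ^ 2 * (p i).rep 0 + t * (p i).rep 1 + (p i).rep 2) = 1 :=
      inv_mul_cancel₀ (ht i)
    simp only [Pi.smul_apply, smul_eq_mul]
    linear_combination this
  · intro i j hij
    refine hp ?_
    rw [← (p i).mk_rep, ← (p j).mk_rep, Projectivization.mk_eq_mk_iff']
    refine ⟨(c i)⁻¹ * c j, ?_⟩
    have hij' : c i • (p i).rep = c j • (p j).rep := hij
    rw [mul_smul, ← hij', smul_smul, inv_mul_cancel₀ (hc i), one_smul]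

/-! ### Generic kernels of matrices of polynomials -/

section GenericKernel

variable {σ ρ γ : Type*}

lemma exists_max_minor [Fintype γ] (M : Matrix ρ γ (MvPolynomial σ K)) :
    ∃ (s : ℕ) (f : Fin s → ρ) (g : Fin s → γ), (M.submatrix f g).det ≠ 0 ∧
      ∀ (f' : Fin (s + 1) → ρ) (g' : Fin (s + 1) → γ), (M.submatrix f' g').det = 0 := by
  classical
  let Q : ℕ → Prop := fun s => ∃ (f : Fin s → ρ) (g : Fin s → γ), (M.submatrix f g).det ≠ 0
  have h0 : Q 0 := ⟨Fin.elim0, Fin.elim0, by simp⟩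
  have hb : ∀ s, Q s → s ≤ Fintype.card γ := by
    rintro s ⟨f, g, hfg⟩
    have hg : Function.Injective g := by
      intro a b hab
      by_contra hne
      exact hfg (Matrix.det_zero_of_column_eq hne fun k => by simp [hab])
    simpa using Fintype.card_le_of_injective g hg
  obtain ⟨f, g, hfg⟩ := Nat.findGreatest_spec (P := Q) (Nat.zero_le (Fintype.card γ)) h0
  refine ⟨_, f, g, hfg, fun f' g' => ?_⟩
  by_contra hne
  exact Nat.findGreatest_is_greatest (P := Q) (Nat.lt_succ_self _) (hb _ ⟨f', g', hne⟩)
    ⟨f', g', hne⟩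

/-- If the minors of size `s + 1` vanish, expanding the minor with rows `a, f` and columns `j, g`
along its first row gives a linear relation among the columns `j, g`, independent of `a`. -/
lemma exists_cofactors {R : Type*} [CommRing R] (M : Matrix ρ γ R) {s : ℕ} (f : Fin s → ρ)
    (g : Fin s → γ)
    (hmax : ∀ (f' : Fin (s + 1) → ρ) (g' : Fin (s + 1) → γ), (M.submatrix f' g').det = 0)
    (j : γ) :
    ∃ Δ : Fin s → R, ∀ a, M a j * (M.submatrix f g).det + ∑ b, M a (g b) * Δ b = 0 := by
  refine ⟨fun b => (-1) ^ (b.succ : ℕ) * (M.submatrix f fun b' =>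
    (Fin.cons j g : Fin (s + 1) → γ) (b.succ.succAbove b')).det, fun a => ?_⟩
  have h1 := hmax (Fin.cons a f) (Fin.cons j g)
  rw [Matrix.det_succ_row_zero, Fin.sum_univ_succ] at h1
  refine Eq.trans (congrArg₂ (· + ·) ?_ (Finset.sum_congr rfl fun b _ => ?_)) h1
  · simp [Function.comp_def, Matrix.submatrix_submatrix]
  · simp only [Matrix.submatrix_apply, Fin.cons_zero, Fin.cons_succ, Matrix.submatrix_submatrix]
    rw [mul_left_comm, mul_assoc]
    rfl

/-- Where a suitable minor `D` of a matrix of polynomials does not vanish, every kernel vector of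
the specialized matrix extends, up to the nonzero factor `D`, to a kernel vector with polynomial
entries. -/
lemma exists_kernel_family [Fintype γ] (M : Matrix ρ γ (MvPolynomial σ K)) :
    ∃ (s : ℕ) (f : Fin s → ρ) (g : Fin s → γ), (M.submatrix f g).det ≠ 0 ∧
      ∀ (x : σ → K) (c₀ : γ → K), eval x (M.submatrix f g).det ≠ 0 →
        (∀ a, ∑ k, eval x (M a k) * c₀ k = 0) →
        ∃ c : γ → MvPolynomial σ K, (∀ a, ∑ k, M a k * c k = 0) ∧
          ∀ k, eval x (c k) = eval x (M.submatrix f g).det * c₀ k := by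
  classical
  obtain ⟨s, f, g, hD, hmax⟩ := exists_max_minor M
  refine ⟨s, f, g, hD, fun x c₀ hx hc₀ => ?_⟩
  choose Δ hΔ using fun j => exists_cofactors M f g hmax j
  let w : Fin s → MvPolynomial σ K := fun b => ∑ j, C (c₀ j) * Δ j b
  let c : γ → MvPolynomial σ K := fun k =>
    C (c₀ k) * (M.submatrix f g).det + ∑ b, if g b = k then w b else 0
  have hMc : ∀ a, ∑ k, M a k * c k =
      ∑ k, M a k * (C (c₀ k) * (M.submatrix f g).det) + ∑ b, M a (g b) * w b := by
    intro a
    simp only [c, mul_add, Finset.sum_add_distrib, Finset.mul_sum, mul_ite, mul_zero]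
    congr 1
    rw [Finset.sum_comm]
    simp
  have hker : ∀ a, ∑ k, M a k * c k = 0 := by
    intro a
    rw [hMc]
    simp only [w, Finset.mul_sum]
    rw [Finset.sum_comm, ← Finset.sum_add_distrib]
    refine Finset.sum_eq_zero fun j _ => ?_
    have := congrArg (C (c₀ j) * ·) (hΔ j a)
    simp only [mul_add, Finset.mul_sum, mul_zero] at this
    rw [← this]
    congr 1
    · ring
    · exact Finset.sum_congr rfl fun b _ => by ring
  refine ⟨c, hker, ?_⟩
  -- the correction terms are supported on the columns `g`, on which the matrix is injective
  have hw : (fun b => eval x (w b)) = 0 := by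
    refine Matrix.eq_zero_of_mulVec_eq_zero (M := (M.submatrix f g).map (eval x)) ?_ ?_
    · rw [← RingHom.mapMatrix_apply, ← RingHom.map_det]
      exact hx
    · funext a
      have h1 := congrArg (eval x) ((hMc (f a)).symm.trans (hker (f a)))
      rw [map_add, map_sum, map_sum, map_zero] at h1
      simp only [map_mul, eval_C, ← mul_assoc] at h1
      rw [← Finset.sum_mul, hc₀, zero_mul, zero_add] at h1
      exact h1
  intro k
  simp only [c, map_add, map_mul, eval_C, map_sum]
  rw [Finset.sum_eq_zero, add_zero, mul_comm]
  intro b _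
  split_ifs
  · exact congrFun hw b
  · exact map_zero _

lemma isWeightedHomogeneous_det {W : Type*} [AddCommMonoid W] {w : σ → W} {n : ρ → W}
    {M : Matrix ρ γ (MvPolynomial σ K)} (hM : ∀ a k, IsWeightedHomogeneous w (M a k) (n a))
    {s : ℕ} (f : Fin s → ρ) (g : Fin s → γ) :
    IsWeightedHomogeneous w (M.submatrix f g).det (∑ a, n (f a)) := by
  rw [Matrix.det_apply]
  refine Submodule.sum_mem (weightedHomogeneousSubmodule K w _) fun τ _ => ?_
  have h1 : IsWeightedHomogeneous w (∏ a, (M.submatrix f g) (τ a) a) (∑ a, n (f a)) := by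
    rw [← Equiv.sum_comp τ]
    exact IsWeightedHomogeneous.prod _ _ _ fun a _ => hM _ _
  rw [Units.smul_def]
  exact zsmul_mem (show _ ∈ weightedHomogeneousSubmodule K w _ from h1) _

end GenericKernel

/-! ### Linear conditions imposed by multiple points -/

/-- The exponents of the monomials of degree `h` in three variables. -/
abbrev FormIdx (h : ℕ) : Type := (Finset.finsuppAntidiag (Finset.univ : Finset (Fin 3)) h)

/-- The form of degree `h` with given coefficients. -/
noncomputable def form {h : ℕ} (c : FormIdx h → K) : MvPolynomial (Fin 3) K :=
  ∑ s, C (c s) * monomial s.1 1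

lemma isHomogeneous_monomial_formIdx {h : ℕ} (s : FormIdx h) :
    (monomial s.1 (1 : K)).IsHomogeneous h := by
  refine isHomogeneous_monomial _ ?_
  have := (Finset.mem_finsuppAntidiag.1 s.2).1
  rw [Finsupp.degree_eq_sum]
  exact this

lemma isHomogeneous_form {h : ℕ} (c : FormIdx h → K) : (form c).IsHomogeneous h :=
  IsHomogeneous.sum _ _ _ fun s _ => (isHomogeneous_monomial_formIdx s).C_mul _

lemma form_coeff {h : ℕ} {F : MvPolynomial (Fin 3) K} (hF : F.IsHomogeneous h) :
    form (fun s : FormIdx h => coeff s.1 F) = F := by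
  classical
  have hsub : F.support ⊆ Finset.finsuppAntidiag (Finset.univ : Finset (Fin 3)) h := by
    intro s hs
    rw [Finset.mem_finsuppAntidiag]
    refine ⟨?_, Finset.subset_univ _⟩
    have := hF.degree_eq_sum_deg_support hs
    rw [this]
    exact (Finset.sum_subset (Finset.subset_univ _) fun i _ hi => by simpa using hi).symm
  have h1 : ∀ s : Fin 3 →₀ ℕ, C (coeff s F) * monomial s 1 = monomial s (coeff s F) :=
    fun s => by rw [C_mul_monomial, mul_one]
  rw [form, Finset.sum_coe_sort (Finset.finsuppAntidiag (Finset.univ : Finset (Fin 3)) h)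
    (fun s => C (coeff s F) * monomial s 1), Finset.sum_congr rfl fun s _ => h1 s]
  refine (Finset.sum_subset hsub fun s _ hs => ?_).symm.trans (support_sum_monomial_coeff F)
  rw [notMem_support_iff.1 hs, monomial_zero]

lemma eval_pderivs_form {h : ℕ} (c : FormIdx h → K) (l : List (Fin 3)) (v : Fin 3 → K) :
    eval v (pderivs l (form c)) = ∑ s, eval v (pderivs l (monomial s.1 1)) * c s := by
  rw [form, pderivs_sum, map_sum]
  exact Finset.sum_congr rfl fun s _ => by rw [pderivs_C_mul, map_mul, eval_C, mul_comm]

/-- The matrix of the linear conditions on the coefficients of a form of degree `h` to have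
multiplicity at least `k i` at the `i`-th of `r` points with indeterminate coordinates. A row is
an index `i` together with a list of less than `k i` directions of differentiation. -/
noncomputable def condMatrix (K : Type) [Field K] {r : ℕ} (h : ℕ) (k : Fin r → ℕ) :
    Matrix {a : Fin r × List (Fin 3) // a.2.length < k a.1} (FormIdx h)
      (MvPolynomial (Fin r × Fin 3) K) :=
  fun a s => rename (fun j => (a.1.1, j)) (pderivs a.1.2 (monomial s.1 1))

lemma eval_condMatrix {r h : ℕ} {k : Fin r → ℕ} (x : Fin r × Fin 3 → K)
    (a : {a : Fin r × List (Fin 3) // a.2.length < k a.1}) (s : FormIdx h) :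
    eval x (condMatrix K h k a s) =
      eval (fun j => x (a.1.1, j)) (pderivs a.1.2 (monomial s.1 1)) := by
  rw [condMatrix, eval_rename]; rfl

lemma pderiv_condMatrix {r h : ℕ} {k : Fin r → ℕ} (i : Fin r) (j : Fin 3)
    (a : {a : Fin r × List (Fin 3) // a.2.length < k a.1}) (s : FormIdx h) :
    pderiv (i, j) (condMatrix K h k a s) = if a.1.1 = i then
      rename (fun j => (a.1.1, j)) (pderivs (j :: a.1.2) (monomial s.1 1)) else 0 := by
  classical
  rw [condMatrix]
  split_ifs with hi
  · subst hi
    exact pderiv_rename (f := fun j => (a.1.1, j)) (fun _ _ hj => congrArg Prod.snd hj) j _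
  · refine pderiv_eq_zero_of_notMem_vars fun hmem => hi ?_
    obtain ⟨j', -, hj'⟩ := Finset.mem_image.1 (vars_rename _ _ hmem)
    exact congrArg Prod.fst hj'

/-- The degree with respect to each of the `r` groups of variables, as a weight. -/
def groupWeight (r : ℕ) : Fin r × Fin 3 → Fin r → ℕ := fun q => Pi.single q.1 1

lemma isWeightedHomogeneous_rename {r n : ℕ} (i : Fin r) {G : MvPolynomial (Fin 3) K}
    (hG : G.IsHomogeneous n) :
    IsWeightedHomogeneous (groupWeight r) (rename (fun j => (i, j)) G)
      (n • (Pi.single i 1 : Fin r → ℕ)) := by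
  intro d hd
  obtain ⟨u, rfl, hu⟩ := coeff_rename_ne_zero _ _ _ hd
  rw [Finsupp.weight_apply, Finsupp.sum_mapDomain_index
    (h := fun q (c : ℕ) => c • groupWeight r q) (fun _ => zero_smul ℕ _)
    (fun _ _ _ => add_smul _ _ _), hG.degree_eq_sum_deg_support (mem_support_iff.2 hu),
    Finset.sum_smul]
  rfl

lemma isWeightedHomogeneous_condMatrix {r h : ℕ} {k : Fin r → ℕ}
    (a : {a : Fin r × List (Fin 3) // a.2.length < k a.1}) (s : FormIdx h) :
    IsWeightedHomogeneous (groupWeight r) (condMatrix K h k a s)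
      ((h - a.1.2.length) • (Pi.single a.1.1 1 : Fin r → ℕ)) :=
  isWeightedHomogeneous_rename _ (isHomogeneous_pderivs _ (isHomogeneous_monomial_formIdx s))

lemma sum_eq_of_isWeightedHomogeneous {r : ℕ} {G : MvPolynomial (Fin r × Fin 3) K}
    {n : Fin r → ℕ} (hG : IsWeightedHomogeneous (groupWeight r) G n) {m : Fin r × Fin 3 →₀ ℕ}
    (hm : m ∈ G.support) (i : Fin r) : ∑ j, m (i, j) = n i := by
  rw [← hG (mem_support_iff.1 hm), Finsupp.weight_apply,
    Finsupp.sum_fintype _ (fun q (c : ℕ) => c • groupWeight r q) (fun _ => zero_smul ℕ _),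
    Finset.sum_apply, Fintype.sum_prod_type,
    Finset.sum_eq_single i]
  · simp [groupWeight]
  · intro b _ hb
    simp [groupWeight, hb.symm]
  · simp

/-! ### Genericity -/

/-- Let the coefficients `c` of a form of degree `h` be polynomial functions of the points, such
that the form keeps multiplicity at least `k i` at the `i`-th point as the points move. Let `E` be
the derivative of this family in the direction moving the `j`-th coordinate of the `i₀`-th point.
For `i ≠ i₀` all derivatives of `E` of order less than `k i` vanish at the `i`-th point, and at the
`i₀`-th point they are the negatives of those of the `j`-th derivative of the form. -/
lemma eval_pderivs_deformation {r h : ℕ} {k : Fin r → ℕ}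
    {c : FormIdx h → MvPolynomial (Fin r × Fin 3) K}
    (hc : ∀ a, ∑ s, condMatrix K h k a s * c s = 0) (x : Fin r × Fin 3 → K) (i₀ : Fin r)
    (j : Fin 3) (i : Fin r) (l : List (Fin 3)) (hl : l.length < k i) :
    eval (fun j => x (i, j)) (pderivs l (form fun s => eval x (pderiv (i₀, j) (c s)))) +
      (if i = i₀ then
        eval (fun j => x (i, j)) (pderivs (j :: l) (form fun s => eval x (c s))) else 0) = 0 := by
  have h1 := congrArg (fun P => eval x (pderiv (i₀, j) P)) (hc ⟨(i, l), hl⟩)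
  simp only [map_sum, map_zero, Derivation.leibniz, smul_eq_mul, map_add, map_mul,
    Finset.sum_add_distrib, eval_condMatrix, pderiv_condMatrix] at h1
  rw [eval_pderivs_form, eval_pderivs_form]
  refine Eq.trans (congrArg₂ (· + ·) rfl ?_) h1
  split_ifs with hi
  · exact Finset.sum_congr rfl fun s _ => by rw [eval_rename, mul_comm]; rfl
  · simp only [map_zero, mul_zero, Finset.sum_const_zero]

/-- The bound for a form `F` which is, up to the factor `δ`, a member of a polynomial family of
forms keeping multiplicity at least `k i` at the `i`-th point as the points move. One of the
derivatives of the family is not divisible by `F`, for otherwise `F` would have multiplicity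
`k i₀ + 1` at the `i₀`-th point, and Bézout's inequality applies to it. -/
lemma bound_of_family [CharZero K] {r h : ℕ} {k : Fin r → ℕ} {F : MvPolynomial (Fin 3) K}
    (hF : F.IsHomogeneous h) (hirr : Irreducible F) {p : Fin r → P2 K}
    (hp : Function.Injective p) (hm : ∀ i, MultAtLeast F (p i) (k i))
    {i₀ : Fin r} (hk : 1 ≤ k i₀) (hmax : ¬ MultAtLeast F (p i₀) (k i₀ + 1))
    {c : FormIdx h → MvPolynomial (Fin r × Fin 3) K}
    (hc : ∀ a, ∑ s, condMatrix K h k a s * c s = 0) {δ : K} (hδ : δ ≠ 0)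
    (hcF : ∀ s, eval (fun q : Fin r × Fin 3 => (p q.1).rep q.2) (c s) = δ * coeff s.1 F) :
    ∑ i, k i ^ 2 ≤ h ^ 2 + k i₀ := by
  classical
  set x : Fin r × Fin 3 → K := fun q => (p q.1).rep q.2 with hx
  let E : Fin 3 → MvPolynomial (Fin 3) K := fun j => form fun s => eval x (pderiv (i₀, j) (c s))
  have hδF : form (fun s => eval x (c s)) = C δ * F := by
    conv_rhs => rw [← form_coeff hF]
    simp only [form, hcF, Finset.mul_sum, C_mul, mul_assoc]
  have key : ∀ j i (l : List (Fin 3)), l.length < k i → eval (p i).rep (pderivs l (E j)) +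
      (if i = i₀ then δ * eval (p i).rep (pderivs (j :: l) F) else 0) = 0 := by
    intro j i l hl
    have := eval_pderivs_deformation hc x i₀ j i l hl
    rw [hδF, pderivs_C_mul, map_mul, eval_C] at this
    exact this
  by_cases hdvd : ∀ j, F ∣ E j
  · -- the first derivatives of `F` would have multiplicity `k i₀` at the `i₀`-th point
    refine absurd (fun l hl => ?_) hmax
    rcases l with _ | ⟨j, l⟩
    · exact hm i₀ [] hk
    · have hl' : l.length < k i₀ := by simpa using hl
      obtain ⟨Q, hQ⟩ := hdvd j
      have h1 := key j i₀ l hl'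
      rw [hQ, mult_mul_right (hm i₀) Q l hl', zero_add, if_pos rfl] at h1
      exact (mul_eq_zero.1 h1).resolve_left hδ
  · push Not at hdvd
    obtain ⟨j, hj⟩ := hdvd
    have hn : ∀ i, MultAtLeast (E j) (p i) (if i = i₀ then k i - 1 else k i) := by
      intro i l hl
      split_ifs at hl with hi
      · have h1 := key j i l (by omega)
        rw [if_pos hi, hm i (j :: l) (by rw [List.length_cons]; omega), mul_zero, add_zero] at h1
        exact h1
      · have h1 := key j i l hl
        rw [if_neg hi, add_zero] at h1
        exact h1
    have h1 := bezout hF (isHomogeneous_form _) hirr hj hp hm hn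
    have h2 : ∑ i, k i ^ 2 = ∑ i, k i * (if i = i₀ then k i - 1 else k i) + k i₀ := by
      rw [← Finset.add_sum_erase _ _ (Finset.mem_univ i₀),
        ← Finset.add_sum_erase (a := i₀) _ (fun i => k i * _) (Finset.mem_univ i₀), if_pos rfl]
      obtain ⟨n, hn⟩ := Nat.exists_eq_add_of_le' hk
      have h3 : ∑ i ∈ Finset.univ.erase i₀, k i ^ 2 =
          ∑ i ∈ Finset.univ.erase i₀, k i * (if i = i₀ then k i - 1 else k i) :=
        Finset.sum_congr rfl fun i hi => by rw [if_neg (Finset.ne_of_mem_erase hi), sq]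
      rw [h3, hn, Nat.add_sub_cancel]
      ring
    omega

/-- For given multiplicities `k`, the bound holds where the generic rank of the conditions is
attained, that is, where a suitable nonzero multihomogeneous minor does not vanish. -/
lemma exists_minor [CharZero K] {r : ℕ} (h : ℕ) (k : Fin r → ℕ) :
    ∃ (D : MvPolynomial (Fin r × Fin 3) K) (n : Fin r → ℕ), D ≠ 0 ∧
      IsWeightedHomogeneous (groupWeight r) D n ∧
      ∀ p : Fin r → P2 K, Function.Injective p →
        eval (fun q : Fin r × Fin 3 => (p q.1).rep q.2) D ≠ 0 →
        ∀ F : MvPolynomial (Fin 3) K, Irreducible F → F.IsHomogeneous h →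
        (∀ i, MultAtLeast F (p i) (k i)) → (∀ i, ¬ MultAtLeast F (p i) (k i + 1)) →
        ∀ i₀, 1 ≤ k i₀ → ∑ i, k i ^ 2 ≤ h ^ 2 + k i₀ := by
  obtain ⟨s, f, g, hD, H⟩ := exists_kernel_family (condMatrix K h k)
  refine ⟨_, _, hD, isWeightedHomogeneous_det isWeightedHomogeneous_condMatrix f g, ?_⟩
  intro p hp hx F hirr hF hm hmax i₀ hk
  obtain ⟨c, hc, hcF⟩ := H _ (fun s => coeff s.1 F) hx fun a => by
    simp only [eval_condMatrix]
    rw [← eval_pderivs_form (fun s : FormIdx h => coeff s.1 F), form_coeff hF]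
    exact hm a.1.1 a.1.2 a.2
  exact bound_of_family hF hirr hp hm hk (hmax i₀) hc hx hcF

lemma exists_exact_mult [CharZero K] {h : ℕ} {F : MvPolynomial (Fin 3) K} (hF : F.IsHomogeneous h)
    (hF0 : F ≠ 0) {p : P2 K} {m : ℕ} (hm : MultAtLeast F p m) :
    ∃ k : Fin (h + 1), m ≤ k ∧ MultAtLeast F p k ∧ ¬ MultAtLeast F p (k + 1) := by
  classical
  have hb : ∀ n, MultAtLeast F p n → n ≤ h := by
    intro n hn
    by_contra hlt
    exact hF0 (eq_zero_of_mult hF (mult_mono hn (by omega)))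
  have hle : Nat.findGreatest (MultAtLeast F p) h ≤ h := Nat.findGreatest_le h
  refine ⟨⟨Nat.findGreatest (MultAtLeast F p) h, by omega⟩,
    Nat.le_findGreatest (hb m hm) hm, Nat.findGreatest_spec (hb m hm) hm, fun H => ?_⟩
  exact Nat.findGreatest_is_greatest (Nat.lt_succ_self _) (hb _ H) H

end CurveBound

/-- For `r ≥ 1`, an integer `h ≥ 1` and non-negative integers `h_1, …, h_r`, for
generic points `p_1, …, p_r` the following holds: if there is an irreducible
homogeneous polynomial `F` of degree `h` with `mult_{p_i} F ≥ h_i` for all `i`,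
then `∑ h_i² ≤ h² + h`. -/
theorem exceptional_curve_bound (K : Type) [Field K] [IsAlgClosed K] [CharZero K]
    (r : ℕ) (hr : 1 ≤ r) (h : ℕ) (hpos : 1 ≤ h) (hh : Fin r → ℕ) :
    GenericTuple K r (fun p =>
      (∃ F : MvPolynomial (Fin 3) K, Irreducible F ∧ F.IsHomogeneous h ∧
        ∀ i, MultAtLeast F (p i) (hh i)) →
      ∑ i, hh i ^ 2 ≤ h ^ 2 + h) := by
  choose D n hD hDn H using fun k : Fin r → Fin (h + 1) =>
    CurveBound.exists_minor (K := K) h fun i => (k i : ℕ)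
  refine ⟨∏ k, D k, ∑ k, n k, Finset.prod_ne_zero_iff.2 fun k _ => hD k, fun m hm i =>
    CurveBound.sum_eq_of_isWeightedHomogeneous
      (MvPolynomial.IsWeightedHomogeneous.prod _ _ _ fun k _ => hDn k) hm i, ?_⟩
  rintro p hp hG ⟨F, hirr, hF, hm⟩
  rw [map_prod, Finset.prod_ne_zero_iff] at hG
  choose k hk hmult hmax using fun i => CurveBound.exists_exact_mult hF hirr.ne_zero (hm i)
  refine (Finset.sum_le_sum fun i _ => Nat.pow_le_pow_left (hk i) 2).trans ?_
  by_cases h0 : ∃ i₀, 1 ≤ (k i₀ : ℕ)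
  · obtain ⟨i₀, hi₀⟩ := h0
    have h1 := H k p hp (hG k (Finset.mem_univ k)) F hirr hF hmult hmax i₀ hi₀
    have h2 : (k i₀ : ℕ) ≤ h := Nat.lt_succ_iff.1 (k i₀).2
    omega
  · push Not at h0
    rw [Finset.sum_eq_zero fun i _ => by rw [Nat.lt_one_iff.1 (h0 i)]; rfl]
    exact Nat.zero_le _
end
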